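/- arXiv:1710.08190 — 3 statements merged into one kernel-verified Lean document; each statement's English description precedes it below -/
import Mathlib

section
/- For every triple (u,v,w) ∈ {0,1}³ with (u,v,w) ≠ (1,1,1), the set of metrics d on the space 2^ℕ = (ℕ → {0,1}) that induce the product topology and for which the metric space (2^ℕ, d) has type (u,v,w), quotiented by the equivalence relation of quasi-symmetric equivalence, has cardinality exactly 2^ℵ₀. -/
open Metric Set
open scoped ENNReal NNReal

noncomputable section

/-- A metric space is doubling if there is `N` such that every closed ball of radius `r`
can be covered by at most `N` closed balls of radius `r / 2`. -/
def IsDoubling (X : Type*) [MetricSpace X] : Prop :=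
  ∃ N : ℕ, ∀ (x : X) (r : ℝ), ∃ c : Finset X, c.card ≤ N ∧
    Metric.closedBall x r ⊆ ⋃ y ∈ c, Metric.closedBall y (r / 2)

/-- Every `δ`-chain is trivial (constant). -/
def IsUniformlyDisconnectedWith (X : Type*) [MetricSpace X] (δ : ℝ) : Prop :=
  ∀ (N : ℕ) (x : ℕ → X),
    (∀ i : ℕ, 1 ≤ i → i ≤ N → dist (x (i - 1)) (x i) ≤ δ * dist (x 0) (x N)) →
    ∀ i ≤ N, x i = x 0

def IsUniformlyDisconnected (X : Type*) [MetricSpace X] : Prop :=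
  ∃ δ : ℝ, 0 < δ ∧ δ < 1 ∧ IsUniformlyDisconnectedWith X δ

/-- `ρ`-uniform perfectness. -/
def IsUniformlyPerfectWith (X : Type*) [MetricSpace X] (ρ : ℝ) : Prop :=
  ∀ (x : X) (r : ℝ), 0 < r → r < Metric.diam (Set.univ : Set X) →
    (Metric.closedBall x r \ Metric.ball x (ρ * r)).Nonempty

def IsUniformlyPerfect (X : Type*) [MetricSpace X] : Prop :=
  ∃ ρ : ℝ, 0 < ρ ∧ ρ ≤ 1 ∧ IsUniformlyPerfectWith X ρ

/-- A metric space has type `(u, v, w) ∈ {0,1}³` (here encoded by `Bool`s) if `u = 1` exactly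
when it is doubling, `v = 1` exactly when it is uniformly disconnected, and `w = 1` exactly
when it is uniformly perfect. -/
def HasType (X : Type*) [MetricSpace X] (u v w : Bool) : Prop :=
  (IsDoubling X ↔ u = true) ∧ (IsUniformlyDisconnected X ↔ v = true) ∧
    (IsUniformlyPerfect X ↔ w = true)

/-- `S_D`: points having no doubling neighborhood. -/
def SD (X : Type*) [MetricSpace X] : Set X :=
  {x : X | ∀ s ∈ nhds x, ¬ IsDoubling ↥s}

/-- `S_UD`: points having no uniformly disconnected neighborhood. -/
def SUD (X : Type*) [MetricSpace X] : Set X :=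
  {x : X | ∀ s ∈ nhds x, ¬ IsUniformlyDisconnected ↥s}

/-- `S_UP`: points having no uniformly perfect neighborhood. -/
def SUP (X : Type*) [MetricSpace X] : Set X :=
  {x : X | ∀ s ∈ nhds x, ¬ IsUniformlyPerfect ↥s}

/-- The ternary correspondence map `T(x) = Σ_{i≥1} 2 x_i / 3^i` (indices shifted to start
at `0`). -/
def cantorT (x : ℕ → Bool) : ℝ :=
  ∑' i : ℕ, 2 * (if x i then (1 : ℝ) else 0) / 3 ^ (i + 1)

/-- A Cantor space: a topological space homeomorphic to the middle-third Cantor set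
(`cantorSet` is Mathlib's middle-third Cantor set in `ℝ`). -/
def IsCantorSpace (X : Type*) [TopologicalSpace X] : Prop :=
  Nonempty (X ≃ₜ ↥cantorSet)

/-- The first index at which `x` and `y` differ. -/
def seqV (x y : ℕ → Bool) : ℕ := sInf {n | x n ≠ y n}

-- The standard ultrametric `e(x,y) = 3^{-(v(x,y)+1)}` on `2^ℕ` (indices starting at `0`,
-- corresponding to `3^{-min{n ≥ 1 : x_n ≠ y_n}}` with indices starting at `1`).
open Classical in
def cantorE (x y : ℕ → Bool) : ℝ :=
  if x = y then 0 else (3 : ℝ)⁻¹ ^ (seqV x y + 1)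

/-- A shrinking sequence: positive, non-increasing, converging to `0`. -/
def IsShrinking (α : ℕ → ℝ) : Prop :=
  (∀ n, 0 < α n) ∧ (∀ m n : ℕ, m ≤ n → α n ≤ α m) ∧
    Filter.Tendsto α Filter.atTop (nhds 0)

-- The distance `d_α(x,y) = α (v(x,y))` associated with a sequence `α`.
open Classical in
def seqDist (α : ℕ → ℝ) (x y : ℕ → Bool) : ℝ :=
  if x = y then 0 else α (seqV x y)

lemma seqV_comm (x y : ℕ → Bool) : seqV x y = seqV y x := by
  unfold seqV
  congr 1
  ext n
  exact ne_comm

lemma seqDist_self (α : ℕ → ℝ) (x : ℕ → Bool) : seqDist α x x = 0 := by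
  rw [seqDist, if_pos rfl]

lemma seqDist_of_ne (α : ℕ → ℝ) {x y : ℕ → Bool} (h : x ≠ y) :
    seqDist α x y = α (seqV x y) := by
  rw [seqDist, if_neg h]

lemma seqDist_nonneg {α : ℕ → ℝ} (hα : ∀ n, 0 < α n) (x y : ℕ → Bool) :
    0 ≤ seqDist α x y := by
  rcases eq_or_ne x y with h | h
  · rw [h, seqDist_self]
  · rw [seqDist_of_ne α h]
    exact (hα _).le

lemma min_seqV_le {x y z : ℕ → Bool} (hxz : x ≠ z) :
    min (seqV x y) (seqV y z) ≤ seqV x z := by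
  have hne : {n | x n ≠ z n}.Nonempty := by
    rcases Function.ne_iff.mp hxz with ⟨n, hn⟩
    exact ⟨n, hn⟩
  have hmem : x (seqV x z) ≠ z (seqV x z) := Nat.sInf_mem hne
  rcases ne_or_eq (x (seqV x z)) (y (seqV x z)) with h | h
  · exact le_trans (min_le_left _ _) (Nat.sInf_le h)
  · have h' : y (seqV x z) ≠ z (seqV x z) := by rw [← h]; exact hmem
    exact le_trans (min_le_right _ _) (Nat.sInf_le h')

/-- The sequentially metrized Cantor space `(2^ℕ, d_α)` for a shrinking sequence `α`. -/
def seqMetricSpace (α : ℕ → ℝ) (hα : IsShrinking α) : MetricSpace (ℕ → Bool) where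
  dist := seqDist α
  dist_self x := seqDist_self α x
  dist_comm x y := by
    show seqDist α x y = seqDist α y x
    rcases eq_or_ne x y with h | h
    · rw [h]
    · rw [seqDist_of_ne α h, seqDist_of_ne α h.symm, seqV_comm]
  dist_triangle x y z := by
    show seqDist α x z ≤ seqDist α x y + seqDist α y z
    rcases eq_or_ne x z with hxz | hxz
    · rw [hxz, seqDist_self]
      exact add_nonneg (seqDist_nonneg hα.1 _ _) (seqDist_nonneg hα.1 _ _)
    rcases eq_or_ne x y with hxy | hxy
    · subst hxy
      rw [seqDist_self, zero_add]
    rcases eq_or_ne y z with hyz | hyz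
    · subst hyz
      rw [seqDist_self, add_zero]
    rw [seqDist_of_ne α hxz, seqDist_of_ne α hxy, seqDist_of_ne α hyz]
    have h1 : α (seqV x z) ≤ α (min (seqV x y) (seqV y z)) :=
      hα.2.1 _ _ (min_seqV_le hxz)
    rcases min_cases (seqV x y) (seqV y z) with ⟨he, _⟩ | ⟨he, _⟩
    · rw [he] at h1
      exact h1.trans (le_add_of_nonneg_right (hα.1 _).le)
    · rw [he] at h1
      exact h1.trans (le_add_of_nonneg_left (hα.1 _).le)
  eq_of_dist_eq_zero := by
    intro x y h
    by_contra hne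
    have h' : seqDist α x y = 0 := h
    rw [seqDist_of_ne α hne] at h'
    exact absurd h' (ne_of_gt (hα.1 _))

/-- The Assouad dimension of a metric space. -/
def assouadDim (X : Type*) [MetricSpace X] : ℝ≥0∞ :=
  sInf {d : ℝ≥0∞ | ∃ s : ℝ, 0 < s ∧ d = ENNReal.ofReal s ∧ ∃ K : ℝ, 0 < K ∧
    ∀ ε : ℝ, 0 < ε → ε < 2 → ∀ r : ℝ, 0 < r → ∀ x : X,
      ∃ c : Finset X, (c.card : ℝ) ≤ K * ε ^ (-s) ∧
        Metric.closedBall x r ⊆ ⋃ y ∈ c, Metric.closedBall y (ε * r)}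

/-- The Hausdorff dimension of (the whole of) a metric space. -/
def hausdorffDim (X : Type*) [MetricSpace X] : ℝ≥0∞ := dimH (Set.univ : Set X)

/-- The topology induced by a metric. -/
def metricTopology {X : Type*} (m : MetricSpace X) : TopologicalSpace X :=
  m.toPseudoMetricSpace.toUniformSpace.toTopologicalSpace

/-- `f : X → Y` is quasi-symmetric: for some self-homeomorphism `η` of `[0,∞)`,
`d(f x, f y)/d(f x, f z) ≤ η (d(x,y)/d(x,z))` for all distinct `x, y, z`. -/
def IsQuasiSymmetric {X Y : Type*} [MetricSpace X] [MetricSpace Y] (f : X → Y) : Prop :=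
  ∃ η : Homeomorph (Set.Ici (0 : ℝ)) (Set.Ici (0 : ℝ)),
    ∀ x y z : X, x ≠ y → x ≠ z → y ≠ z →
      dist (f x) (f y) / dist (f x) (f z) ≤
        (η ⟨dist x y / dist x z, div_nonneg dist_nonneg dist_nonneg⟩ : ℝ)

/-- Two metric spaces (given by explicit metric structures) are quasi-symmetrically
equivalent if there is a quasi-symmetric homeomorphism between them. -/
def QSEquiv (X Y : Type*) (mX : MetricSpace X) (mY : MetricSpace Y) : Prop :=
  ∃ f : @Homeomorph X Y (metricTopology mX) (metricTopology mY),
    @IsQuasiSymmetric X Y mX mY f.toEquiv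


/-- The `ℓ^∞`-product metric (the sup metric) on `X × Y`. -/
def prodMetric {X Y : Type*} (mX : MetricSpace X) (mY : MetricSpace Y) :
    MetricSpace (X × Y) :=
  letI := mX; letI := mY; Prod.metricSpaceMax

namespace QS

abbrev P := ℕ → Bool

/-- index of the first `true` (junk value `0` for the zero sequence) -/
def fe (x : P) : ℕ := sInf {i | x i = true}

lemma fe_spec {x : P} {j : ℕ} (h : ¬ ∀ i < j, x i = false) :
    fe x < j ∧ x (fe x) = true ∧ ∀ i < fe x, x i = false := by
  push Not at h
  obtain ⟨i, hi, hx⟩ := h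
  have hx' : x i = true := by simpa using hx
  have hm : x (fe x) = true := Nat.sInf_mem (s := {i | x i = true}) ⟨i, hx'⟩
  refine ⟨lt_of_le_of_lt (Nat.sInf_le hx') hi, hm, fun l hl => ?_⟩
  have := Nat.notMem_of_lt_sInf hl
  simpa using this

lemma fe_eq {x : P} {n : ℕ} (h1 : x n = true) (h2 : ∀ i < n, x i = false) : fe x = n := by
  obtain ⟨h, h', h''⟩ := fe_spec (x := x) (j := n + 1) (by
    intro hh; have := hh n (by omega); simp_all)
  by_contra hne
  have := h2 (fe x) (by omega)
  simp_all

lemma fe_le {x : P} {i : ℕ} (h : x i = true) : fe x ≤ i := Nat.sInf_le h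

lemma fe_congr {x y : P} {j : ℕ} (hxy : ∀ i < j, x i = y i) (h : ¬ ∀ i < j, x i = false) :
    fe y = fe x := by
  obtain ⟨h1, h2, h3⟩ := fe_spec h
  exact fe_eq (by rw [← hxy _ h1, h2]) (fun i hi => by rw [← hxy i (by omega), h3 i hi])

section
variable (a b c : ℕ → ℕ)

open Classical in
/-- exponent of the ultrametric part -/
def g (x : P) (j : ℕ) : ℕ :=
  if (∀ i < j, x i = false) then j
  else if j < fe x + 1 + a (fe x) + b (fe x) then fe x + 1 + a (fe x)
  else j - b (fe x) + c (fe x)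

variable {a b c}

lemma g_zero {x : P} {j : ℕ} (h : ∀ i < j, x i = false) : g a b c x j = j := by
  simp only [g]; rw [if_pos h]

lemma g_mid {x : P} {j : ℕ} (h : ¬ ∀ i < j, x i = false)
    (h2 : j < fe x + 1 + a (fe x) + b (fe x)) : g a b c x j = fe x + 1 + a (fe x) := by
  simp only [g]; rw [if_neg h, if_pos h2]

lemma g_hi {x : P} {j : ℕ} 
    (h2 : fe x + 1 + a (fe x) + b (fe x) ≤ j) (h : ¬ ∀ i < j, x i = false) :
    g a b c x j = j - b (fe x) + c (fe x) := by
  simp only [g]; rw [if_neg h, if_neg (by omega)]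

lemma g_congr {x y : P} {j : ℕ} (hxy : ∀ i < j, x i = y i) : g a b c x j = g a b c y j := by
  by_cases h : ∀ i < j, x i = false
  · rw [g_zero h, g_zero (fun i hi => by rw [← hxy i hi, h i hi])]
  · have h' : ¬ ∀ i < j, y i = false := fun hh => h (fun i hi => by rw [hxy i hi, hh i hi])
    simp only [g]
    rw [if_neg h, if_neg h', fe_congr hxy h]

lemma g_mono (x : P) : Monotone (g a b c x) := by
  intro j k hjk
  by_cases hk : ∀ i < k, x i = false
  · rw [g_zero hk, g_zero (fun i hi => hk i (by omega))]; exact hjk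
  obtain ⟨h1, h2, h3⟩ := fe_spec hk
  by_cases hj : ∀ i < j, x i = false
  · have : j ≤ fe x := by
      by_contra hh
      have := hj (fe x) (by omega)
      simp_all
    rw [g_zero hj]
    simp only [g]; rw [if_neg hk]; split_ifs <;> omega
  · simp only [g]; rw [if_neg hk, if_neg hj]; split_ifs <;> omega

/-- lower bound for `g` giving that it tends to infinity -/
lemma le_g (x : P) (j : ℕ) : j ≤ g a b c x j + b (fe x) := by
  simp only [g]; split_ifs <;> omega

/-- binary partial sums -/
def bs (s : P) (N : ℕ) : ℝ := ∑ i ∈ Finset.range N, if s i then (1/2:ℝ)^(i+1) else 0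

lemma bs_succ (s : P) (N : ℕ) : bs s (N+1) = bs s N + if s N then (1/2:ℝ)^(N+1) else 0 := by
  simp [bs, Finset.sum_range_succ]

lemma bs_congr {s t : P} {N : ℕ} (h : ∀ i < N, s i = t i) : bs s N = bs t N := by
  apply Finset.sum_congr rfl
  intro i hi
  rw [h i (Finset.mem_range.1 hi)]

lemma bs_diff {s t : P} {j : ℕ} (h : ∀ i < j, s i = t i) (N : ℕ) :
    |bs s (j + N) - bs t (j + N)| ≤ (1/2:ℝ)^j - (1/2:ℝ)^(j+N) := by
  induction N with
  | zero => simp [bs_congr h]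
  | succ N ih =>
    rw [← add_assoc, bs_succ, bs_succ]
    have hp : (0:ℝ) < (1/2)^(j+N) := by positivity
    rw [pow_succ (1/2:ℝ) (j+N)]
    rw [abs_le] at ih ⊢
    split_ifs <;> constructor <;> linarith [ih.1, ih.2]

lemma bs_diff_le {s t : P} {j : ℕ} (h : ∀ i < j, s i = t i) (N : ℕ) :
    |bs s N - bs t N| ≤ (1/2:ℝ)^j := by
  rcases le_total j N with hN | hN
  · obtain ⟨k, rfl⟩ := Nat.exists_eq_add_of_le hN
    have := bs_diff h k
    have hp : (0:ℝ) < (1/2)^(j+k) := by positivity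
    linarith
  · rw [bs_congr (fun i hi => h i (by omega))]; simp

lemma bs_diff_ge {s t : P} {j : ℕ} (h : ∀ i < j, s i = t i) (hj : s j ≠ t j) (N : ℕ) :
    (1/2:ℝ)^(j+1+N) ≤ |bs s (j + 1 + N) - bs t (j + 1 + N)| := by
  induction N with
  | zero =>
    rw [add_zero, bs_succ, bs_succ, bs_congr h]
    have hp : (0:ℝ) < (1/2)^(j+1) := by positivity
    cases h1 : s j <;> cases h2 : t j <;> simp_all
  | succ N ih =>
    rw [← add_assoc, bs_succ, bs_succ]
    have hp : (0:ℝ) < (1/2)^(j+1+N) := by positivity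
    rw [pow_succ (1/2:ℝ) (j+1+N)]
    rw [le_abs] at ih ⊢
    split_ifs <;> rcases ih with ih | ih <;> first | (left; linarith) | (right; linarith)

variable (a) in
/-- the real coordinate -/
def ph (x : P) : ℝ := bs x (fe x + 1 + a (fe x))

variable (a) in
def tr (x : P) : P := fun i => x i && decide (i < fe x + 1 + a (fe x))

lemma ph_eq (x : P) {N : ℕ} (hN : fe x + 1 + a (fe x) ≤ N) : ph a x = bs (tr a x) N := by
  unfold ph
  rw [bs_congr (s := x) (t := tr a x) (fun i hi => by simp [tr]; omega)]
  unfold bs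
  apply Finset.sum_subset (by simpa using hN)
  intro i _ hi
  simp [tr] at hi ⊢
  intros; omega

lemma tr_congr {x y : P} {j : ℕ} (h : ∀ i < j, x i = y i) : ∀ i < j, tr a x i = tr a y i := by
  intro i hi
  simp only [tr]
  cases hx : x i
  · rw [← h i hi, hx]; simp
  · rw [← h i hi, hx, fe_congr (x := x) (y := y) (j := i+1) (fun k hk => h k (by omega))]
    intro hh; have := hh i (by omega); simp_all

lemma ph_diff_le {x y : P} {j : ℕ} (h : ∀ i < j, x i = y i) : |ph a x - ph a y| ≤ (1/2:ℝ)^j := by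
  rw [ph_eq (N := max (fe x + 1 + a (fe x)) (fe y + 1 + a (fe y))) x (le_max_left _ _),
    ph_eq (N := max (fe x + 1 + a (fe x)) (fe y + 1 + a (fe y))) y (le_max_right _ _)]
  exact bs_diff_le (tr_congr h) _

open PiNat

lemma fd_ne {x y : P} (h : x ≠ y) : x (firstDiff x y) ≠ y (firstDiff x y) := apply_firstDiff_ne h

lemma fd_lt (x y : P) : ∀ i < firstDiff x y, x i = y i := fun _ hi => apply_eq_of_lt_firstDiff hi

lemma fd_eq {x y : P} {n : ℕ} (h1 : x n ≠ y n) (h2 : ∀ i < n, x i = y i) : firstDiff x y = n := by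
  have hne : x ≠ y := fun h => h1 (by rw [h])
  rcases lt_trichotomy (firstDiff x y) n with h | h | h
  · exact absurd (h2 _ h) (fd_ne hne)
  · exact h
  · exact absurd (fd_lt x y n h) h1

lemma le_fd {x y : P} (hne : x ≠ y) {n : ℕ} (h2 : ∀ i < n, x i = y i) : n ≤ firstDiff x y := by
  by_contra h
  exact fd_ne hne (h2 _ (by omega))

variable (a b c)

open Classical in
def bt (x y : P) : ℝ := if x = y then 0 else (1/2:ℝ)^(g a b c x (firstDiff x y))

def D (x y : P) : ℝ := max |ph a x - ph a y| (bt a b c x y)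

variable {a b c}

lemma bt_ne {x y : P} (h : x ≠ y) : bt a b c x y = (1/2:ℝ)^(g a b c x (firstDiff x y)) := by
  simp only [bt]; rw [if_neg h]

lemma bt_self (x : P) : bt a b c x x = 0 := by simp [bt]

lemma bt_nonneg (x y : P) : 0 ≤ bt a b c x y := by
  simp only [bt]; split_ifs <;> positivity

lemma bt_comm (x y : P) : bt a b c x y = bt a b c y x := by
  rcases eq_or_ne x y with rfl | h
  · rfl
  rw [bt_ne h, bt_ne h.symm, firstDiff_comm y x, g_congr (fd_lt x y)]

lemma half_anti {m n : ℕ} (h : m ≤ n) : (1/2:ℝ)^n ≤ (1/2:ℝ)^m :=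
  pow_le_pow_of_le_one (by norm_num) (by norm_num) h

lemma half_le_iff {m n : ℕ} : (1/2:ℝ)^n ≤ (1/2:ℝ)^m ↔ m ≤ n :=
  pow_le_pow_iff_right_of_lt_one₀ (by norm_num) (by norm_num)

lemma bt_ultra (x y z : P) : bt a b c x z ≤ max (bt a b c x y) (bt a b c y z) := by
  rcases eq_or_ne x z with rfl | hxz
  · rw [bt_self]; exact le_max_of_le_left (bt_nonneg _ _)
  rcases eq_or_ne x y with rfl | hxy
  · exact le_max_right _ _
  rcases eq_or_ne y z with rfl | hyz
  · exact le_max_left _ _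
  rw [bt_ne hxz, bt_ne hxy, bt_ne hyz]
  have hm := min_firstDiff_le x y z hxz
  by_cases h : firstDiff x y ≤ firstDiff x z
  · exact le_max_of_le_left (half_anti (g_mono x h))
  · have h1 : firstDiff y z ≤ firstDiff x z := by
      rcases min_le_iff.1 hm with h' | h'
      · exact absurd h' h
      · exact h'
    apply le_max_of_le_right
    rw [← g_congr (x := x) (y := y) (fun i hi => fd_lt x y i (by omega))]
    exact half_anti (g_mono x h1)

lemma bt_le_D (x y : P) : bt a b c x y ≤ D a b c x y := le_max_right _ _

lemma D_self (x : P) : D a b c x x = 0 := by simp [D, bt_self]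

lemma D_comm (x y : P) : D a b c x y = D a b c y x := by
  simp only [D]; rw [bt_comm, abs_sub_comm]

lemma D_tri (x y z : P) : D a b c x z ≤ D a b c x y + D a b c y z := by
  have h1 : ∀ u v, 0 ≤ bt a b c u v := bt_nonneg
  have h2 : |ph a x - ph a z| ≤ |ph a x - ph a y| + |ph a y - ph a z| := abs_sub_le _ _ _
  refine max_le (h2.trans (add_le_add (le_max_left _ _) (le_max_left _ _))) ?_
  refine (bt_ultra x y z).trans ?_
  refine (max_le_add_of_nonneg (h1 _ _) (h1 _ _)).trans ?_
  exact (add_le_add (le_max_right _ _) (le_max_right _ _))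

lemma D_pos {x y : P} (h : x ≠ y) : 0 < D a b c x y := by
  refine lt_of_lt_of_le ?_ (bt_le_D x y)
  rw [bt_ne h]; positivity

lemma D_nonneg (x y : P) : 0 ≤ D a b c x y := (bt_nonneg x y).trans (bt_le_D x y)

variable (a b c) in
def mD : MetricSpace P where
  dist := D a b c
  dist_self := D_self
  dist_comm := D_comm
  dist_triangle := D_tri
  eq_of_dist_eq_zero := by
    intro x y h
    by_contra hne
    exact (D_pos hne).ne' h

lemma mD_dist (x y : P) : @dist P (mD a b c).toDist x y = D a b c x y := rfl

lemma D_le_one (x y : P) : D a b c x y ≤ 1 := by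
  refine max_le ?_ ?_
  · simpa using ph_diff_le (a := a) (x := x) (y := y) (j := 0) (by simp)
  · simp only [bt]; split_ifs
    · norm_num
    · exact pow_le_one₀ (by norm_num) (by norm_num)

lemma D_le_of {x y : P} (h : x ≠ y) {r : ℝ} (h1 : (1/2:ℝ)^(firstDiff x y) ≤ r)
    (h2 : (1/2:ℝ)^(g a b c x (firstDiff x y)) ≤ r) : D a b c x y ≤ r := by
  refine max_le ((ph_diff_le (fd_lt x y)).trans h1) ?_
  rw [bt_ne h]; exact h2

lemma top_eq : metricTopology (mD a b c) = Pi.topologicalSpace := by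
  have key : ∀ s : Set P, @IsOpen P (metricTopology (mD a b c)) s ↔
      ∀ x ∈ s, ∃ ε > 0, ∀ y, D a b c y x < ε → y ∈ s := by
    intro s
    exact @Metric.isOpen_iff P (mD a b c).toPseudoMetricSpace s
  have key2 : ∀ s : Set P, IsOpen s ↔ ∀ x ∈ s, ∃ n, ∀ y : P, (∀ i < n, x i = y i) → y ∈ s := by
    intro s
    have hb := PiNat.isTopologicalBasis_cylinders (fun _ : ℕ => Bool)
    rw [hb.isOpen_iff]
    constructor
    · intro h x hx
      obtain ⟨t, ⟨z, n, rfl⟩, hxt, hts⟩ := h x hx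
      refine ⟨n, fun y hy => hts ?_⟩
      rw [PiNat.mem_cylinder_iff] at hxt ⊢
      intro i hi
      rw [← hy i hi, hxt i hi]
    · intro h x hx
      obtain ⟨n, hn⟩ := h x hx
      refine ⟨_, ⟨x, n, rfl⟩, PiNat.self_mem_cylinder x n, fun y hy => hn y ?_⟩
      rw [PiNat.mem_cylinder_iff] at hy
      intro i hi
      rw [hy i hi]
  apply TopologicalSpace.ext_iff.2
  intro s
  rw [key, key2]
  constructor
  · intro h x hx
    obtain ⟨ε, hε, H⟩ := h x hx
    obtain ⟨n, hn⟩ := exists_pow_lt_of_lt_one hε (by norm_num : (1/2:ℝ) < 1)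
    refine ⟨n + b (fe x), fun y hy => H y ?_⟩
    rcases eq_or_ne x y with rfl | hxy
    · rw [D_self]; exact hε
    rw [D_comm]
    have h1 := le_fd hxy hy
    have h2 := le_g (a := a) (b := b) (c := c) x (firstDiff x y)
    exact lt_of_le_of_lt (D_le_of hxy (half_anti (by omega)) (half_anti (by omega))) hn
  · intro h x hx
    obtain ⟨n, H⟩ := h x hx
    refine ⟨(1/2:ℝ)^(g a b c x n), by positivity, fun y hy => H y ?_⟩
    rcases eq_or_ne x y with rfl | hxy
    · simp
    intro i hi
    by_contra hne
    have h1 : firstDiff x y < n := by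
      by_contra hh
      exact hne (fd_lt x y i (by omega))
    rw [D_comm] at hy
    have h2 := lt_of_le_of_lt (bt_le_D x y) hy
    rw [bt_ne hxy] at h2
    exact absurd (half_anti (g_mono (a := a) (b := b) (c := c) x h1.le)) (not_le.2 h2)


/-- `x` lies in the `n`-th piece -/
def inP (n : ℕ) (x : P) : Prop := x n = true ∧ ∀ i < n, x i = false

lemma inP.fe {n : ℕ} {x : P} (h : inP n x) : fe x = n := fe_eq h.1 h.2

lemma inP.nz {n : ℕ} {x : P} (h : inP n x) {j : ℕ} (hj : n < j) : ¬ ∀ i < j, x i = false := by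
  intro hh; have := hh n hj; have := h.1; simp_all

lemma inP_of_ne {x : P} (h : ∃ i, x i = true) : inP (QS.fe x) x := by
  obtain ⟨i, hi⟩ := h
  obtain ⟨_, h2, h3⟩ := fe_spec (x := x) (j := i+1) (by
    intro hh; have := hh i (by omega); simp_all)
  exact ⟨h2, h3⟩

lemma inP_of_nz {x : P} {j : ℕ} (h : ¬ ∀ i < j, x i = false) : inP (fe x) x ∧ fe x < j := by
  obtain ⟨h1, h2, h3⟩ := fe_spec h
  exact ⟨⟨h2, h3⟩, h1⟩

lemma inP.congr {n : ℕ} {x y : P} (h : inP n x) (hxy : ∀ i < n + 1, x i = y i) : inP n y :=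
  ⟨by rw [← hxy n (by omega), h.1], fun i hi => by rw [← hxy i (by omega), h.2 i hi]⟩

lemma ph_inP {n : ℕ} {x : P} (h : inP n x) : ph a x = bs x (n + 1 + a n) := by
  unfold ph; rw [h.fe]

lemma ph_same {n : ℕ} {x y : P} (h : inP n x) (hxy : ∀ i < n + 1 + a n, x i = y i) :
    ph a x = ph a y := by
  rw [ph_inP h, ph_inP (h.congr (fun i hi => hxy i (by omega))), bs_congr hxy]

lemma D_zero_case {x y : P} (h : x ≠ y) (hz : ∀ i < firstDiff x y, x i = false) :
    D a b c x y = (1/2:ℝ)^(firstDiff x y) := by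
  apply le_antisymm
  · exact D_le_of h le_rfl (by rw [g_zero hz])
  · refine le_trans ?_ (bt_le_D x y)
    rw [bt_ne h, g_zero hz]

lemma D_hi_case {n : ℕ} {x y : P} (h : x ≠ y) (hx : inP n x)
    (hv : n + 1 + a n ≤ firstDiff x y) :
    D a b c x y = (1/2:ℝ)^(g a b c x (firstDiff x y)) := by
  unfold D
  rw [ph_same hx (fun i hi => fd_lt x y i (by omega)), bt_ne h]
  simp

lemma D_eq_bt (ha : ∀ n, a n = 0) (x y : P) : D a b c x y = bt a b c x y := by
  rcases eq_or_ne x y with rfl | hxy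
  · simp [D_self, bt_self]
  by_cases hz : ∀ i < firstDiff x y, x i = false
  · rw [D_zero_case hxy hz, bt_ne hxy, g_zero hz]
  · obtain ⟨h1, h2⟩ := inP_of_nz hz
    rw [D_hi_case hxy h1 (by rw [ha]; omega), bt_ne hxy]

lemma cover {ι : Type*} [DecidableEq ι] (B : Set P) (r : ℝ) (code : P → ι) (F : Finset ι)
    (hF : ∀ y ∈ B, code y ∈ F)
    (h : ∀ y ∈ B, ∀ z ∈ B, code y = code z → D a b c y z ≤ r) :
    ∃ C : Finset P, C.card ≤ F.card ∧ ∀ y ∈ B, ∃ z ∈ C, D a b c y z ≤ r := by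
  classical
  let rep : ι → P := fun i => if h : ∃ y ∈ B, code y = i then h.choose else fun _ => false
  refine ⟨F.image rep, Finset.card_image_le, fun y hy => ⟨rep (code y), ?_, ?_⟩⟩
  · exact Finset.mem_image_of_mem _ (hF y hy)
  · have hex : ∃ z ∈ B, code z = code y := ⟨y, hy, rfl⟩
    have hr : rep (code y) = hex.choose := by simp only [rep]; rw [dif_pos hex]
    rw [hr]
    exact h y hy _ hex.choose_spec.1 hex.choose_spec.2.symm

lemma doubling_pos (hb : ∀ n, b n = 0) : @IsDoubling P (mD a b c) := by
  classical
  suffices H : ∀ (x : P) (r : ℝ), ∃ C : Finset P, C.card ≤ 28 ∧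
      ∀ y, D a b c y x ≤ r → ∃ z ∈ C, D a b c y z ≤ r / 2 by
    refine ⟨28, fun x r => ?_⟩
    obtain ⟨C, h1, h2⟩ := H x r
    refine ⟨C, h1, fun y hy => ?_⟩
    obtain ⟨z, hz, hd⟩ := h2 y hy
    simp only [Set.mem_iUnion]
    exact ⟨z, hz, hd⟩
  intro x r
  rcases le_or_gt r 0 with hr | hr
  · refine ⟨{x}, by simp, fun y hy => ⟨x, by simp, ?_⟩⟩
    have := D_nonneg (a := a) (b := b) (c := c) y x
    linarith
  have hex : ∃ j, (1/2:ℝ)^(g a b c x j) ≤ r := by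
    obtain ⟨n, hn⟩ := exists_pow_lt_of_lt_one hr (by norm_num : (1/2:ℝ) < 1)
    have := le_g (a := a) (b := b) (c := c) x n
    rw [hb] at this
    exact ⟨n, (half_anti this).trans hn.le⟩
  obtain ⟨j, hj, hjmin⟩ : ∃ j, (1/2:ℝ)^(g a b c x j) ≤ r ∧ ∀ i < j, r < (1/2:ℝ)^(g a b c x i) :=
    ⟨Nat.find hex, Nat.find_spec hex, fun i hi => not_le.1 (Nat.find_min hex hi)⟩
  let T := fe x + 1 + a (fe x)
  let code : P → ℤ × Bool × Bool := fun y =>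
    (⌊ph a y * (2 / r)⌋ - ⌊ph a x * (2 / r)⌋, y j, y (max j T))
  have hagree : ∀ y, D a b c y x ≤ r → ∀ i < j, x i = y i := by
    intro y hy i hi
    by_contra hne
    have hxy : x ≠ y := fun h => hne (by rw [h])
    have h1 : firstDiff x y < j := by
      by_contra hh
      exact hne (fd_lt x y i (by omega))
    have h2 := hjmin _ h1
    have h3 := bt_le_D (a := a) (b := b) (c := c) x y
    rw [bt_ne hxy] at h3
    rw [D_comm] at hy
    linarith
  have hA : ∀ y ∈ {y | D a b c y x ≤ r}, code y ∈
      ((Finset.Icc (-3) 3 ×ˢ Finset.univ ×ˢ Finset.univ : Finset (ℤ × Bool × Bool))) := by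
    intro y hy
    simp only [code, Finset.mem_product, Finset.mem_univ, and_true, Finset.mem_Icc]
    have h1 : |ph a y - ph a x| ≤ r := (le_max_left _ _).trans hy
    have h2 : |ph a y * (2 / r) - ph a x * (2 / r)| ≤ 2 := by
      rw [← sub_mul, abs_mul, abs_of_pos (by positivity : 0 < 2 / r)]
      calc _ ≤ r * (2 / r) := by gcongr
        _ = 2 := by field_simp
    rw [abs_le] at h2
    have e1 := Int.floor_le (ph a y * (2 / r))
    have e2 := Int.lt_floor_add_one (ph a y * (2 / r))
    have e3 := Int.floor_le (ph a x * (2 / r))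
    have e4 := Int.lt_floor_add_one (ph a x * (2 / r))
    constructor
    · have : (-3:ℝ) < (⌊ph a y * (2 / r)⌋ - ⌊ph a x * (2 / r)⌋ : ℤ) := by push_cast; linarith [h2.1]
      have : (-3:ℤ) < (⌊ph a y * (2 / r)⌋ - ⌊ph a x * (2 / r)⌋ : ℤ) := by exact_mod_cast this
      omega
    · have : ((⌊ph a y * (2 / r)⌋ - ⌊ph a x * (2 / r)⌋ : ℤ) : ℝ) < 3 := by push_cast; linarith [h2.2]
      have : (⌊ph a y * (2 / r)⌋ - ⌊ph a x * (2 / r)⌋ : ℤ) < 3 := by exact_mod_cast this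
      omega
  have hB : ∀ y ∈ {y | D a b c y x ≤ r}, ∀ z ∈ {y | D a b c y x ≤ r}, code y = code z →
      D a b c y z ≤ r / 2 := by
    intro y hy z hz hcode
    simp only [code, Prod.mk.injEq] at hcode
    obtain ⟨hc1, hc2, hc3⟩ := hcode
    have hfl : ⌊ph a y * (2 / r)⌋ = ⌊ph a z * (2 / r)⌋ := by omega
    have hph : |ph a y - ph a z| ≤ r / 2 := by
      have := Int.abs_sub_lt_one_of_floor_eq_floor hfl
      rw [← sub_mul, abs_mul, abs_of_pos (by positivity : 0 < 2 / r)] at this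
      rw [← mul_le_mul_iff_of_pos_right (by positivity : 0 < 2 / r)]
      calc _ ≤ 1 := this.le
        _ = _ := by field_simp
    refine max_le hph ?_
    rcases eq_or_ne y z with rfl | hyz
    · rw [bt_self]; linarith
    have hya := hagree y hy
    have hza := hagree z hz
    have hgj : g a b c x j = g a b c y j := g_congr hya
    have hv : j + 1 ≤ firstDiff y z := by
      apply le_fd hyz
      intro i hi
      rcases Nat.lt_succ_iff_lt_or_eq.1 hi with hi | rfl
      · rw [← hya i hi, hza i hi]
      · exact hc2
    rw [bt_ne hyz]
    have step : ∀ m, g a b c x j + 1 ≤ m → (1/2:ℝ)^m ≤ r / 2 := by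
      intro m hm
      calc (1/2:ℝ)^m ≤ (1/2:ℝ)^(g a b c x j + 1) := half_anti hm
        _ = (1/2:ℝ)^(g a b c x j) / 2 := by rw [pow_succ]; ring
        _ ≤ r / 2 := by linarith
    by_cases hzx : ∀ i < j, x i = false
    · -- the ball consists of points with `j` leading zeros
      apply step
      refine le_trans ?_ (g_mono y hv)
      rw [g_zero hzx]
      simp only [g]
      split_ifs with h1 h2
      · rfl
      · have : j ≤ fe y := by
          by_contra hh
          obtain ⟨p1, p2, p3⟩ := fe_spec h1
          have := hya (fe y) (by omega)
          rw [hzx _ (by omega), p2] at this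
          simp at this
        omega
      · rw [hb]; omega
    · obtain ⟨hx, hxj⟩ := inP_of_nz hzx
      have hxy : inP (fe x) y := hx.congr (fun i hi => hya i (by omega))
      have hxz : inP (fe x) z := hx.congr (fun i hi => hza i (by omega))
      have hfy := hxy.fe
      have hyj : ¬ ∀ i < j, y i = false := hxy.nz hxj
      have hyv : ¬ ∀ i < firstDiff y z, y i = false := hxy.nz (by omega)
      by_cases hvT : firstDiff y z < T
      · rw [g_mid hyv (by rw [hfy, hb]; exact hvT), hfy]
        refine le_trans ?_ hph
        rw [ph_inP hxy, ph_inP hxz]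
        obtain ⟨N, hN⟩ := Nat.exists_eq_add_of_le hvT
        have : fe x + 1 + a (fe x) = firstDiff y z + 1 + N := hN
        rw [this]
        exact bs_diff_ge (fd_lt y z) (fd_ne hyz) N
      · apply step
        rw [hgj]
        have hvm : firstDiff y z ≠ max j T := by
          intro hh
          apply fd_ne hyz
          rw [hh]; exact hc3
        have hTdef : T = fe x + 1 + a (fe x) := rfl
        rw [g_hi (x := y) (j := firstDiff y z) (by rw [hfy, hb]; omega) hyv]
        have hbx := hb (fe x)
        by_cases hjT : j < T
        · rw [g_mid hyj (by rw [hfy, hb]; omega), hfy]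
          omega
        · rw [g_hi (by rw [hfy, hb]; omega) hyj, hfy]
          omega
  obtain ⟨C, hC, hC2⟩ := cover (a := a) (b := b) (c := c) {y | D a b c y x ≤ r} (r / 2) code
    _ hA hB
  exact ⟨C, hC.trans (by decide), hC2⟩

lemma ud_pos (ha : ∀ n, a n = 0) : @IsUniformlyDisconnected P (mD a b c) := by
  refine ⟨1/2, by norm_num, by norm_num, ?_⟩
  intro N x hx
  simp only [mD_dist] at hx
  have key : ∀ m ≤ N, D a b c (x 0) (x m) ≤ 1/2 * D a b c (x 0) (x N) := by
    intro m
    induction m with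
    | zero => intro _; rw [D_self]; have := D_nonneg (a := a) (b := b) (c := c) (x 0) (x N); linarith
    | succ m ih =>
      intro hm
      have h1 := ih (by omega)
      have h2 := hx (m+1) (by omega) hm
      simp only [Nat.add_sub_cancel] at h2
      have := bt_ultra (a := a) (b := b) (c := c) (x 0) (x m) (x (m+1))
      rw [← D_eq_bt ha, ← D_eq_bt ha, ← D_eq_bt ha] at this
      exact this.trans (max_le h1 h2)
  have h0 : D a b c (x 0) (x N) ≤ 0 := by have := key N le_rfl; linarith
  intro i hi
  by_contra hne
  have h1 := key i hi
  have h2 := D_pos (a := a) (b := b) (c := c) hne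
  rw [D_comm] at h2
  linarith

/-- flip one bit -/
def fl (x : P) (j : ℕ) : P := Function.update x j (!x j)

lemma fl_ne (x : P) (j : ℕ) : x ≠ fl x j := by
  intro h
  have := congrFun h j
  simp [fl] at this

lemma fl_agree (x : P) {i j : ℕ} (h : i ≠ j) : x i = fl x j i := by simp [fl, h]

lemma fl_fd (x : P) (j : ℕ) : firstDiff x (fl x j) = j :=
  fd_eq (by simp [fl]) (fun i hi => fl_agree x (by omega))

lemma bs_fl (x : P) (j : ℕ) (N : ℕ) : |bs x (j+1+N) - bs (fl x j) (j+1+N)| = (1/2:ℝ)^(j+1) := by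
  induction N with
  | zero =>
    rw [add_zero, bs_succ, bs_succ, bs_congr (s := x) (t := fl x j) (fun i hi => fl_agree x (by omega))]
    cases h : x j <;> simp [fl, h]
  | succ N ih =>
    rw [← add_assoc, bs_succ, bs_succ, ← fl_agree x (by omega : j + 1 + N ≠ j)]
    rw [← ih]; congr 1; ring

lemma D_fl_mid {n j : ℕ} {x : P} (hx : inP n x) (h1 : n < j) (h2 : j < n + 1 + a n) :
    D a b c x (fl x j) = (1/2:ℝ)^(j+1) := by
  have h3 : ph a x - ph a (fl x j) = bs x (n+1+a n) - bs (fl x j) (n+1+a n) := by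
    rw [ph_inP hx, ph_inP (hx.congr (fun i hi => fl_agree x (by omega)))]
  obtain ⟨N, hN⟩ := Nat.exists_eq_add_of_le (show j + 1 ≤ n + 1 + a n from h2)
  unfold D
  rw [h3, hN, bs_fl, bt_ne (fl_ne x j), fl_fd, g_mid (hx.nz h1) (by rw [hx.fe]; omega), hx.fe]
  exact max_eq_left (half_anti h2)

lemma diam_le : @Metric.diam P (mD a b c).toPseudoMetricSpace Set.univ ≤ 1 := by
  let _ := mD a b c
  exact Metric.diam_le_of_forall_dist_le (by norm_num) (fun x _ y _ => D_le_one x y)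

lemma one_le_diam : 1 ≤ @Metric.diam P (mD a b c).toPseudoMetricSpace Set.univ := by
  let _ := mD a b c
  have h := Metric.dist_le_diam_of_mem (s := (Set.univ : Set P)) (x := fun _ => false)
    (y := fl (fun _ => false) 0)
    ((Metric.isBounded_iff (α := P)).2 ⟨1, fun x _ y _ => D_le_one x y⟩) (Set.mem_univ _) (Set.mem_univ _)
  have h2 : dist (fun _ => false : P) (fl (fun _ => false) 0) = 1 := by
    rw [mD_dist, D_zero_case (fl_ne _ _) (by simp), fl_fd]; simp
  rw [h2] at h
  exact h

lemma up_pos (hc : ∀ n, c n = 0) : @IsUniformlyPerfect P (mD a b c) := by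
  refine ⟨1/4, by norm_num, by norm_num, ?_⟩
  intro x r hr hrd
  have hr1 : r < 1 := lt_of_lt_of_le hrd diam_le
  suffices H : ∃ y, D a b c y x ≤ r ∧ 1/4 * r ≤ D a b c y x by
    obtain ⟨y, h1, h2⟩ := H
    refine ⟨y, h1, fun h => ?_⟩
    exact absurd h2 (not_le.2 h)
  have hstep : ∃ h : ℕ → ℕ, (∀ j, D a b c x (fl x j) = (1/2:ℝ)^(h j)) ∧ h 0 = 0 ∧
      (∀ j, h (j+1) ≤ h j + 2) ∧ (∀ m, ∃ j, m ≤ h j) := by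
    by_cases hz : ∃ i, x i = true
    · have hx := inP_of_ne hz
      set n := fe x with hn
      refine ⟨fun j => if j ≤ n then j else if j < n + 1 + a n then j + 1 else
        if j < n + 1 + a n + b n then n + 1 + a n else j - b n, ?_, by simp, ?_, ?_⟩
      · intro j
        dsimp only
        split_ifs with h1 h2 h3
        · rw [D_zero_case (fl_ne x j), fl_fd]
          rw [fl_fd]; exact fun i hi => hx.2 i (by omega)
        · exact D_fl_mid hx (by omega) h2
        · rw [D_hi_case (fl_ne x j) hx (by rw [fl_fd]; omega), fl_fd,
            g_mid (hx.nz (by omega)) (by rw [hx.fe]; omega), hx.fe]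
        · rw [D_hi_case (fl_ne x j) hx (by rw [fl_fd]; omega), fl_fd,
            g_hi (by rw [hx.fe]; omega) (hx.nz (by omega)), hx.fe, hc, add_zero]
      · intro j
        dsimp only
        split_ifs <;> omega
      · intro m
        refine ⟨n + 1 + a n + b n + m, ?_⟩
        dsimp only
        split_ifs <;> omega
    · have hz' : ∀ i, x i = false := by
        intro i
        by_contra h
        exact hz ⟨i, by simpa using h⟩
      refine ⟨fun j => j, ?_, rfl, fun j => by dsimp only; omega, fun m => ⟨m, le_rfl⟩⟩
      intro j
      rw [D_zero_case (fl_ne x j) (fun i _ => hz' i), fl_fd]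
  obtain ⟨h, h1, h2, h3, h4⟩ := hstep
  have hex : ∃ j, (1/2:ℝ)^(h j) ≤ r := by
    obtain ⟨n, hn⟩ := exists_pow_lt_of_lt_one hr (by norm_num : (1/2:ℝ) < 1)
    obtain ⟨j, hj⟩ := h4 n
    exact ⟨j, (half_anti hj).trans hn.le⟩
  obtain ⟨j, hj, hjmin⟩ : ∃ j, (1/2:ℝ)^(h j) ≤ r ∧ ∀ i < j, r < (1/2:ℝ)^(h i) :=
    ⟨Nat.find hex, Nat.find_spec hex, fun i hi => not_le.1 (Nat.find_min hex hi)⟩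
  refine ⟨fl x j, by rw [D_comm, h1]; exact hj, ?_⟩
  rw [D_comm, h1]
  cases j with
  | zero => rw [h2] at hj ⊢; norm_num; linarith
  | succ j =>
    have e1 := hjmin j (by omega)
    have e2 := half_anti (h3 j)
    rw [pow_add] at e2
    linarith

/-! bad configurations -/

lemma bad_doubling (n : ℕ) : ∃ p : (Fin (b n) → Bool) → P, (∀ s, inP n (p s)) ∧
    ∀ s t, s ≠ t → D a b c (p s) (p t) = (1/2:ℝ)^(n+1+a n) := by
  classical
  refine ⟨fun s i => if i = n then true else if h : n + 1 + a n ≤ i ∧ i < n + 1 + a n + b n then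
    s ⟨i - (n + 1 + a n), by omega⟩ else false, ?_, ?_⟩
  · intro s
    refine ⟨by simp, fun i hi => ?_⟩
    dsimp only
    rw [if_neg (by omega), dif_neg (by omega)]
  · intro s t hst
    set p : (Fin (b n) → Bool) → P := fun s i => if i = n then true else
      if h : n + 1 + a n ≤ i ∧ i < n + 1 + a n + b n then
      s ⟨i - (n + 1 + a n), by omega⟩ else false with hp
    have hP : ∀ s, inP n (p s) := by
      intro s
      refine ⟨by simp [hp], fun i hi => ?_⟩
      simp only [hp]
      rw [if_neg (by omega), dif_neg (by omega)]
    obtain ⟨l, hl⟩ := Function.ne_iff.1 hst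
    have hval : ∀ s, p s (n + 1 + a n + l) = s l := by
      intro s
      simp only [hp]
      rw [if_neg (by omega), dif_pos ⟨by omega, by have := l.2; omega⟩]
      congr 1
      ext; simp
    have hne : p s ≠ p t := by
      intro h
      apply hl
      rw [← hval s, ← hval t, h]
    have h1 : n + 1 + a n ≤ firstDiff (p s) (p t) := by
      apply le_fd hne
      intro i hi
      simp only [hp]
      split_ifs
      · rfl
      · omega
      · rfl
    have h2 : firstDiff (p s) (p t) ≤ n + 1 + a n + l := by
      by_contra hh
      have := fd_lt (p s) (p t) _ (by omega : n + 1 + a n + l < _)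
      rw [hval, hval] at this
      exact hl this
    rw [D_hi_case hne (hP s) h1, g_mid ((hP s).nz (by omega)) (by rw [(hP s).fe]; have := l.2; omega),
      (hP s).fe]

lemma exists_bits (k : ℕ) : ∀ i : ℕ, i < 2^k → ∃ s : P, bs s k = i * (1/2:ℝ)^k := by
  induction k with
  | zero => intro i hi; refine ⟨fun _ => false, ?_⟩; simp at hi; simp [bs, hi]
  | succ k ih =>
    intro i hi
    obtain ⟨s, hs⟩ := ih (i / 2) (by rw [pow_succ] at hi; omega)
    refine ⟨Function.update s k (decide (i % 2 = 1)), ?_⟩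
    rw [bs_succ, bs_congr (t := s), hs]
    · have h1 : (i:ℝ) = 2 * (i/2 : ℕ) + (i % 2 : ℕ) := by
        exact_mod_cast (Nat.div_add_mod i 2).symm
      rcases Nat.mod_two_eq_zero_or_one i with h | h
      · simp only [h] at h1 ⊢
        rw [h1]; simp [pow_succ]; ring
      · simp only [h] at h1 ⊢
        rw [h1]; simp [pow_succ]; ring
    · intro l hl
      rw [Function.update_of_ne (by omega)]

lemma bs_shift (s : P) (m N : ℕ) (x : P) (h : ∀ i < N, x (m + i) = s i) :
    bs x (m + N) = bs x m + (1/2:ℝ)^m * bs s N := by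
  induction N with
  | zero => simp [bs]
  | succ N ih =>
    rw [← add_assoc, bs_succ, bs_succ, ih (fun i hi => h i (by omega)), h N (by omega)]
    split_ifs <;> ring

lemma bad_chain (n : ℕ) : ∃ p : ℕ → P, (∀ i, inP n (p i)) ∧
    (∀ i, i + 1 < 2^(a n) → p i ≠ p (i+1) ∧ D a b c (p i) (p (i+1)) ≤ (1/2:ℝ)^(n+1+a n)) ∧
    ∀ i : ℕ, i < 2^(a n) → (i:ℝ) * (1/2:ℝ)^(n+1+a n) ≤ D a b c (p 0) (p i) := by
  have hb : ∀ i : ℕ, ∃ s : P, i < 2^(a n) → bs s (a n) = i * (1/2:ℝ)^(a n) := by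
    intro i
    by_cases h : i < 2^(a n)
    · obtain ⟨s, hs⟩ := exists_bits (a n) i h
      exact ⟨s, fun _ => hs⟩
    · exact ⟨fun _ => false, fun h' => absurd h' h⟩
  choose s hs using hb
  let p : ℕ → P := fun i l => if l = n then true else
    if n + 1 ≤ l ∧ l < n + 1 + a n then s i (l - (n + 1)) else false
  have hP : ∀ i, inP n (p i) := by
    intro i
    refine ⟨by simp [p], fun l hl => ?_⟩
    simp only [p]
    rw [if_neg (by omega), if_neg (by omega)]
  have hph : ∀ i : ℕ, i < 2^(a n) → ph a (p i) = bs (p 0) (n+1) + i * (1/2:ℝ)^(n+1+a n) := by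
    intro i hi
    rw [ph_inP (hP i), bs_shift (s i), hs i hi, bs_congr (s := p i) (t := p 0)]
    · rw [pow_add (1/2:ℝ) (n+1) (a n)]; ring
    · intro l hl
      simp only [p]
      split_ifs
      · rfl
      · omega
      · rfl
    · intro l hl
      simp only [p]
      rw [if_neg (by omega), if_pos (by omega)]
      congr 1; omega
  have hpos : (0:ℝ) < (1/2:ℝ)^(n+1+a n) := by positivity
  refine ⟨p, hP, fun i hi => ?_, fun i hi => ?_⟩
  · have hne : p i ≠ p (i+1) := by
      intro h
      have h1 := hph i (by omega)
      rw [h, hph (i+1) hi] at h1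
      push_cast at h1
      linarith
    refine ⟨hne, max_le ?_ ?_⟩
    · rw [hph i (by omega), hph (i+1) hi, abs_le]
      push_cast
      constructor <;> linarith
    · have h1 : n + 1 ≤ firstDiff (p i) (p (i+1)) := by
        apply le_fd hne
        intro l hl
        simp only [p]
        split_ifs
        · rfl
        · omega
        · rfl
      have h2 : firstDiff (p i) (p (i+1)) < n + 1 + a n := by
        by_contra hh
        have := ph_same (a := a) (hP i) (fun l hl => fd_lt (p i) (p (i+1)) l (by omega))
        rw [hph i (by omega), hph (i+1) hi] at this
        push_cast at this
        linarith
      rw [bt_ne hne, g_mid ((hP i).nz (by omega)) (by rw [(hP i).fe]; omega), (hP i).fe]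
  · refine le_trans ?_ (le_max_left _ _)
    rw [hph i hi, hph 0 (by positivity), le_abs]
    right
    push_cast
    linarith

lemma bad_gap {n : ℕ} {p : P} (hp : inP n p) (y : P) :
    (inP n y ∧ D a b c p y ≤ (1/2:ℝ)^(n + 1 + a n + c n)) ∨ (1/2:ℝ)^(n+1+a n) ≤ D a b c p y := by
  rcases eq_or_ne p y with rfl | hne
  · left; rw [D_self]; exact ⟨hp, by positivity⟩
  by_cases h : n + 1 + a n + b n ≤ firstDiff p y
  · left
    refine ⟨hp.congr (fun i hi => fd_lt p y i (by omega)), ?_⟩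
    rw [D_hi_case hne hp (by omega), g_hi (by rw [hp.fe]; omega) (hp.nz (by omega)), hp.fe]
    exact half_anti (by omega)
  · right
    refine le_trans ?_ (bt_le_D p y)
    rw [bt_ne hne]
    apply half_anti
    by_cases hz : ∀ i < firstDiff p y, p i = false
    · rw [g_zero hz]
      have : firstDiff p y ≤ n := by
        by_contra hh
        exact hp.nz (by omega) hz
      omega
    · rw [g_mid hz (by rw [hp.fe]; omega), hp.fe]

lemma doubling_neg (hb : ∀ k, ∃ n, k ≤ b n) : ¬ @IsDoubling P (mD a b c) := by
  classical
  rintro ⟨N, hN⟩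
  obtain ⟨n, hn⟩ := hb (N * N)
  obtain ⟨p, hp, hpd⟩ := bad_doubling (a := a) (b := b) (c := c) n
  set r : ℝ := (1/2:ℝ)^(n+1+a n) with hr
  have hr0 : 0 < r := by positivity
  have hN' : ∀ (x : P) (r : ℝ), ∃ C : Finset P, C.card ≤ N ∧
      ∀ y, D a b c y x ≤ r → ∃ z ∈ C, D a b c y z ≤ r / 2 := by
    intro x r
    obtain ⟨C, h1, h2⟩ := hN x r
    refine ⟨C, h1, fun y hy => ?_⟩
    have := h2 (show y ∈ _ from hy)
    simp only [Set.mem_iUnion] at this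
    obtain ⟨z, hz, hd⟩ := this
    exact ⟨z, hz, hd⟩
  choose C hC hC2 using hN'
  let C' : Finset P := (C (p fun _ => false) r).biUnion (fun y => C y (r / 2))
  have hcard : C'.card ≤ N * N :=
    (Finset.card_biUnion_le_card_mul _ _ N (fun y _ => hC _ _)).trans
      (Nat.mul_le_mul_right _ (hC _ _))
  have hz : ∀ s, ∃ z ∈ C', D a b c (p s) z ≤ r / 2 / 2 := by
    intro s
    have h0 : D a b c (p s) (p fun _ => false) ≤ r := by
      by_cases h : s = fun _ => false
      · rw [h, D_self]; exact hr0.le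
      · rw [hpd _ _ h]
    obtain ⟨y, hy, hd⟩ := hC2 _ _ _ h0
    obtain ⟨z, hz, hd'⟩ := hC2 _ _ _ hd
    exact ⟨z, Finset.mem_biUnion.2 ⟨y, hy, hz⟩, hd'⟩
  choose z hz hzd using hz
  have hinj : Function.Injective z := by
    intro s t hst
    by_contra hne
    have h1 := hpd s t hne
    have h2 := D_tri (a := a) (b := b) (c := c) (p s) (z s) (p t)
    have h3 := hzd s
    have h4 := hzd t
    rw [D_comm, ← hst] at h4
    linarith
  have h5 : (Finset.univ : Finset (Fin (b n) → Bool)).card ≤ C'.card :=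
    Finset.card_le_card_of_injOn z (fun s _ => hz s) (fun s _ t _ h => hinj h)
  rw [Finset.card_univ, Fintype.card_fun, Fintype.card_bool, Fintype.card_fin] at h5
  have := Nat.lt_two_pow_self (n := b n)
  omega

lemma ud_neg (ha : ∀ k, ∃ n, k ≤ a n) : ¬ @IsUniformlyDisconnected P (mD a b c) := by
  rintro ⟨δ, h0, h1, H⟩
  obtain ⟨k, hk⟩ := exists_nat_gt (1 / δ)
  obtain ⟨n, hn⟩ := ha (k + 1)
  obtain ⟨p, hp, hp1, hp2⟩ := bad_chain (a := a) (b := b) (c := c) n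
  have hlt := Nat.lt_two_pow_self (n := a n)
  have hr : (0:ℝ) < (1/2:ℝ)^(n+1+a n) := by positivity
  have := H (2^(a n) - 1) p (fun i hi1 hi2 => ?_) 1 (by omega)
  · exact (hp1 0 (by omega)).1 this.symm
  · obtain ⟨j, rfl⟩ : ∃ j, i = j + 1 := ⟨i - 1, by omega⟩
    have e1 := (hp1 j (by omega)).2
    have e2 := hp2 (2^(a n) - 1) (by omega)
    simp only [Nat.add_sub_cancel]
    rw [mD_dist, mD_dist]
    refine e1.trans ?_
    refine le_trans ?_ (mul_le_mul_of_nonneg_left e2 h0.le)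
    rw [← mul_assoc]
    have hk2 : (k:ℝ) ≤ ((2^(a n) - 1 : ℕ) : ℝ) := by exact_mod_cast (by omega)
    have : 1 ≤ δ * ((2^(a n) - 1 : ℕ) : ℝ) := by
      rw [div_lt_iff₀ h0] at hk
      nlinarith
    nlinarith

lemma up_neg (hc : ∀ k, ∃ n, k ≤ c n) : ¬ @IsUniformlyPerfect P (mD a b c) := by
  rintro ⟨ρ, h0, h1, H⟩
  obtain ⟨k, hk⟩ := exists_pow_lt_of_lt_one h0 (by norm_num : (1/2:ℝ) < 1)
  obtain ⟨n, hn⟩ := hc (k + 2)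
  have hp : inP n (fl (fun _ => false) n) := by
    refine ⟨by simp [fl], fun i hi => ?_⟩
    rw [← fl_agree _ (by omega)]
  set p : P := fl (fun _ => false) n
  have hT : (0:ℝ) < (1/2:ℝ)^(n+1+a n) := by positivity
  obtain ⟨y, hy1, hy2⟩ := H p ((1/2:ℝ)^(n+1+a n+1)) (by positivity) (by
    refine lt_of_lt_of_le ?_ one_le_diam
    exact pow_lt_one₀ (by norm_num) (by norm_num) (by omega))
  have hy1' : D a b c p y ≤ (1/2:ℝ)^(n+1+a n+1) := by rw [D_comm]; exact hy1
  have hy2' : ρ * (1/2:ℝ)^(n+1+a n+1) ≤ D a b c p y := by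
    rw [D_comm]; exact not_lt.1 hy2
  rw [pow_succ] at hy1' hy2'
  rcases bad_gap hp y with h | h
  · have h3 : (1/2:ℝ)^(n + 1 + a n + c n) ≤ (1/2:ℝ)^(n + 1 + a n + (k + 2)) := half_anti (by omega)
    rw [pow_add _ _ (k+2), pow_add _ k 2] at h3
    have h4 := h.2
    have : ρ * (1/2:ℝ)^(n+1+a n) * (1/2) ≤ (1/2:ℝ)^(n+1+a n) * ((1/2:ℝ)^k * (1/2)^2) := by linarith
    nlinarith
  · linarith

end

/-! weak quasi-symmetry -/

def WQf (d1 d2 : P → P → ℝ) (f : P → P) : Prop :=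
  (∀ K > 0, ∃ K' > 0, ∀ x y z, d1 x y ≤ K * d1 x z → d2 (f x) (f y) ≤ K' * d2 (f x) (f z)) ∧
  (∀ ε > 0, ∃ δ > 0, ∀ x y z, d1 x y ≤ δ * d1 x z → d2 (f x) (f y) ≤ ε * d2 (f x) (f z))

def dd (m : MetricSpace P) (x y : P) : ℝ := @dist P m.toDist x y

lemma dd_pos (m : MetricSpace P) {x y : P} (h : x ≠ y) : 0 < dd m x y :=
  @dist_pos P m x y |>.2 h

lemma dd_self (m : MetricSpace P) (x : P) : dd m x x = 0 :=
  @dist_self P m.toPseudoMetricSpace x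

lemma dd_nonneg (m : MetricSpace P) (x y : P) : 0 ≤ dd m x y :=
  @dist_nonneg P m.toPseudoMetricSpace x y

lemma WQf.symm {m1 m2 : MetricSpace P} (f : P ≃ P) (h : WQf (dd m1) (dd m2) f) :
    WQf (dd m2) (dd m1) f.symm := by
  obtain ⟨h1, h2⟩ := h
  have conv : ∀ Q : P → P → P → Prop, (∀ x y z, Q (f x) (f y) (f z)) → ∀ x y z, Q x y z := by
    intro Q hQ x y z
    have := hQ (f.symm x) (f.symm y) (f.symm z)
    simpa using this
  constructor
  · intro K hK
    obtain ⟨δ, hδ, H⟩ := h2 (1 / (2 * K)) (by positivity)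
    refine ⟨1 / δ, by positivity, ?_⟩
    apply conv (fun x y z => dd m2 x y ≤ K * dd m2 x z →
      dd m1 (f.symm x) (f.symm y) ≤ 1 / δ * dd m1 (f.symm x) (f.symm z))
    intro x y z hle
    simp only [Equiv.symm_apply_apply]
    by_contra hh
    push Not at hh
    have h3 : dd m1 x z ≤ δ * dd m1 x y := by
      rw [one_div, inv_mul_lt_iff₀ hδ] at hh
      exact hh.le
    have h4 := H x z y h3
    have h5 : dd m2 (f x) (f z) ≤ 1 / 2 * dd m2 (f x) (f z) := by
      refine h4.trans ((mul_le_mul_of_nonneg_left hle (by positivity)).trans (le_of_eq ?_))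
      field_simp
    have hxz : x = z := by
      by_contra hne
      have := dd_pos m2 (f.injective.ne hne)
      linarith
    subst hxz
    have hxy : x = y := by
      by_contra hne
      have := dd_pos m2 (f.injective.ne hne)
      rw [dd_self] at hle
      linarith
    subst hxy
    rw [dd_self] at hh
    simp at hh
  · intro ε hε
    obtain ⟨K', hK', H⟩ := h1 (1 / ε) (by positivity)
    refine ⟨1 / (2 * K'), by positivity, ?_⟩
    apply conv (fun x y z => dd m2 x y ≤ 1 / (2 * K') * dd m2 x z →
      dd m1 (f.symm x) (f.symm y) ≤ ε * dd m1 (f.symm x) (f.symm z))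
    intro x y z hle
    simp only [Equiv.symm_apply_apply]
    by_contra hh
    push Not at hh
    have h3 : dd m1 x z ≤ 1 / ε * dd m1 x y := by
      rw [one_div, le_inv_mul_iff₀ hε]
      exact hh.le
    have h4 := H x z y h3
    have h5 : dd m2 (f x) (f z) ≤ 1 / 2 * dd m2 (f x) (f z) := by
      refine h4.trans ((mul_le_mul_of_nonneg_left hle (by positivity)).trans (le_of_eq ?_))
      field_simp
    have hxz : x = z := by
      by_contra hne
      have := dd_pos m2 (f.injective.ne hne)
      linarith
    subst hxz
    have hxy : x = y := by
      by_contra hne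
      have := dd_pos m2 (f.injective.ne hne)
      rw [dd_self] at hle
      linarith
    subst hxy
    rw [dd_self] at hh
    simp at hh

lemma WQf.trans {d1 d2 d3 : P → P → ℝ} {f f' : P → P} (h : WQf d1 d2 f) (h' : WQf d2 d3 f') :
    WQf d1 d3 (fun x => f' (f x)) := by
  constructor
  · intro K hK
    obtain ⟨K1, hK1, H1⟩ := h.1 K hK
    obtain ⟨K2, hK2, H2⟩ := h'.1 K1 hK1
    exact ⟨K2, hK2, fun x y z hh => H2 _ _ _ (H1 _ _ _ hh)⟩
  · intro K hK
    obtain ⟨K1, hK1, H1⟩ := h'.2 K hK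
    obtain ⟨K2, hK2, H2⟩ := h.2 K1 hK1
    exact ⟨K2, hK2, fun x y z hh => H1 _ _ _ (H2 _ _ _ hh)⟩

def WQ (m1 m2 : MetricSpace P) : Prop := ∃ f : P ≃ P, WQf (dd m1) (dd m2) f

lemma WQ.refl (m : MetricSpace P) : WQ m m :=
  ⟨Equiv.refl P, fun K hK => ⟨K, hK, fun _ _ _ h => h⟩, fun K hK => ⟨K, hK, fun _ _ _ h => h⟩⟩

lemma WQ.symm {m1 m2 : MetricSpace P} (h : WQ m1 m2) : WQ m2 m1 := by
  obtain ⟨f, hf⟩ := h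
  exact ⟨f.symm, hf.symm⟩

lemma WQ.trans {m1 m2 m3 : MetricSpace P} (h : WQ m1 m2) (h' : WQ m2 m3) : WQ m1 m3 := by
  obtain ⟨f, hf⟩ := h
  obtain ⟨f', hf'⟩ := h'
  exact ⟨f.trans f', hf.trans hf'⟩

lemma eta_props' (η : Homeomorph ℝ≥0 ℝ≥0) : StrictMono η ∧ η 0 = 0 := by
  have hm : StrictMono η := by
    rcases η.continuous.strictMono_of_inj η.injective with h | h
    · exact h
    · exfalso
      obtain ⟨t, ht⟩ := η.surjective (η 0 + 1)
      have h2 := h.antitone (show (0:ℝ≥0) ≤ t from t.2)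
      rw [ht] at h2
      have h3 : ((η 0 + 1 : ℝ≥0) : ℝ) ≤ (η 0 : ℝ) := h2
      push_cast at h3
      linarith
  refine ⟨hm, ?_⟩
  obtain ⟨t, ht⟩ := η.surjective 0
  have h2 := hm.monotone (show (0:ℝ≥0) ≤ t from t.2)
  rw [ht] at h2
  exact le_antisymm h2 (η 0).2

lemma eta_props (η : Homeomorph (Set.Ici (0 : ℝ)) (Set.Ici (0 : ℝ))) :
    Monotone η ∧ ∀ t : Set.Ici (0:ℝ), (t:ℝ) = 0 → (η t : ℝ) = 0 := by
  let η' : Homeomorph ℝ≥0 ℝ≥0 := η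
  obtain ⟨h1, h2⟩ := eta_props' η'
  refine ⟨fun s t hst => h1.monotone (a := s) (b := t) hst, fun t ht => ?_⟩
  have : t = (0 : ℝ≥0) := Subtype.ext ht
  rw [this]
  exact congrArg (fun z : ℝ≥0 => (z:ℝ)) h2

lemma WQ_of_QS {m1 m2 : MetricSpace P} (h : QSEquiv P P m1 m2) : WQ m1 m2 := by
  obtain ⟨f, η, H⟩ := h
  obtain ⟨hmono, h0⟩ := eta_props η
  obtain ⟨F, hF⟩ : ∃ F : P ≃ P,
    F = @Homeomorph.toEquiv P P (metricTopology m1) (metricTopology m2) f := ⟨_, rfl⟩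
  refine ⟨F, ?_⟩
  rw [← hF] at H
  have H' : ∀ x y z : P, x ≠ y → x ≠ z → y ≠ z → ∀ K : Set.Ici (0:ℝ),
      dd m1 x y ≤ K * dd m1 x z → dd m2 (F x) (F y) ≤ (η K : ℝ) * dd m2 (F x) (F z) := by
    intro x y z hxy hxz hyz K hle
    have h1 : dd m2 (F x) (F y) / dd m2 (F x) (F z) ≤ (η ⟨dd m1 x y / dd m1 x z,
      div_nonneg (dd_nonneg _ _ _) (dd_nonneg _ _ _)⟩ : ℝ) := H x y z hxy hxz hyz
    have h2 : dd m2 (F x) (F y) / dd m2 (F x) (F z) ≤ (η K : ℝ) := by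
      refine h1.trans ?_
      apply hmono
      have : dd m1 x y / dd m1 x z ≤ K := by
        rw [div_le_iff₀ (dd_pos m1 hxz)]; exact hle
      exact this
    rwa [div_le_iff₀ (dd_pos m2 (F.injective.ne hxz))] at h2
  constructor
  · intro K hK
    refine ⟨max 1 (η ⟨K, hK.le⟩ : ℝ), by positivity, fun x y z hle => ?_⟩
    have hn := dd_nonneg m2 (F x) (F z)
    rcases eq_or_ne x y with rfl | hxy
    · rw [dd_self]; positivity
    rcases eq_or_ne x z with rfl | hxz
    · rw [dd_self, mul_zero] at hle
      exact absurd (dd_pos m1 hxy) (not_lt.2 hle)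
    rcases eq_or_ne y z with rfl | hyz
    · exact le_mul_of_one_le_left hn (le_max_left _ _)
    · exact (H' x y z hxy hxz hyz ⟨K, hK.le⟩ hle).trans
        (mul_le_mul_of_nonneg_right (le_max_right _ _) hn)
  · intro ε hε
    obtain ⟨t, ht⟩ := η.surjective ⟨ε, hε.le⟩
    have htpos : (0:ℝ) < t := by
      rcases lt_or_eq_of_le (show (0:ℝ) ≤ t from t.2) with h | h
      · exact h
      · exfalso
        have h3 := h0 t h.symm
        rw [ht] at h3
        have : ε = 0 := h3
        linarith
    refine ⟨min t (1/2), by positivity, fun x y z hle => ?_⟩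
    have hn := dd_nonneg m2 (F x) (F z)
    rcases eq_or_ne x y with rfl | hxy
    · rw [dd_self]; positivity
    rcases eq_or_ne x z with rfl | hxz
    · rw [dd_self, mul_zero] at hle
      exact absurd (dd_pos m1 hxy) (not_lt.2 hle)
    have hn1 := dd_pos m1 hxz
    rcases eq_or_ne y z with rfl | hyz
    · exfalso
      have := mul_le_mul_of_nonneg_right (min_le_right (t:ℝ) (1/2)) hn1.le
      linarith
    · have := H' x y z hxy hxz hyz t
        (hle.trans (mul_le_mul_of_nonneg_right (min_le_left _ _) hn1.le))
      rwa [ht] at this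

section
variable {a b c a' b' c' : ℕ → ℕ}
open PiNat

def Rg (a b c : ℕ → ℕ) (M : ℕ) (y : P) : Prop := a (fe y) ≤ M ∧ b (fe y) ≤ M ∧ c (fe y) ≤ M

lemma region_lo {M : ℕ} {y y' : P} (hne : y ≠ y') (h : Rg a b c M y) :
    (1/2:ℝ)^(firstDiff y y' + M) ≤ D a b c y y' := by
  obtain ⟨h1, h2, h3⟩ := h
  refine le_trans ?_ (bt_le_D y y')
  rw [bt_ne hne]
  apply half_anti
  by_cases hz : ∀ i < firstDiff y y', y i = false
  · rw [g_zero hz]; omega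
  · obtain ⟨h4, h5⟩ := inP_of_nz hz
    simp only [g]; rw [if_neg hz]; split_ifs <;> omega

lemma region_hi {M : ℕ} {y y' : P} (hne : y ≠ y') (h : Rg a b c M y) :
    D a b c y y' ≤ 2^M * (1/2:ℝ)^(firstDiff y y') := by
  obtain ⟨h1, h2, h3⟩ := h
  have key : ∀ n : ℕ, firstDiff y y' ≤ n + M → (1/2:ℝ)^n ≤ 2^M * (1/2:ℝ)^(firstDiff y y') := by
    intro n hn
    have h4 := half_anti hn
    calc (1/2:ℝ)^n = 2^M * (1/2:ℝ)^(n+M) := by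
          rw [pow_add, mul_comm, mul_assoc, ← mul_pow]; norm_num
      _ ≤ _ := by gcongr
  apply D_le_of hne (key _ (by omega))
  apply key
  have := le_g (a := a) (b := b) (c := c) y (firstDiff y y')
  omega

lemma exists_pow_ge (K : ℝ) : ∃ m : ℕ, K ≤ 2^m := by
  obtain ⟨m, hm⟩ := pow_unbounded_of_one_lt K (by norm_num : (1:ℝ) < 2)
  exact ⟨m, hm.le⟩

/-- `2^-p ≤ 2^m 2^-q` gives `q ≤ p + m` -/
lemma exp_cmp {p q m : ℕ} (h : (1/2:ℝ)^p ≤ 2^m * (1/2:ℝ)^q) : q ≤ p + m := by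
  rw [← half_le_iff, pow_add]
  calc (1/2:ℝ)^p * (1/2)^m ≤ (2^m * (1/2:ℝ)^q) * (1/2)^m := by gcongr
    _ = (1/2:ℝ)^q * (2 * (1/2))^m := by rw [mul_pow]; ring
    _ = _ := by norm_num

lemma core_b (f : P ≃ P) (h : WQf (D a b c) (D a' b' c') f) (M : ℕ) :
    ∃ B, ∀ n, (∀ x, inP n x → Rg a' b' c' M (f x)) → b n ≤ B := by
  obtain ⟨K, hK, H⟩ := h.1 1 one_pos
  obtain ⟨m, hm⟩ := exists_pow_ge K
  refine ⟨4 * (2 * M + m) + 1, fun n hn => ?_⟩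
  set L := 2 * M + m with hL
  obtain ⟨p, hp, hd⟩ := bad_doubling (a := a) (b := b) (c := c) n
  rcases Nat.eq_zero_or_pos (b n) with h0 | h0
  · omega
  have hinj : ∀ s t, s ≠ t → p s ≠ p t := by
    intro s t hst he
    have := hd s t hst
    rw [he, D_self] at this
    have h2 : (0:ℝ) < (1/2:ℝ)^(n+1+a n) := by positivity
    linarith
  have hfne : ∀ s t, s ≠ t → f (p s) ≠ f (p t) := fun s t hst => f.injective.ne (hinj s t hst)
  have step : ∀ s t u, s ≠ t → s ≠ u →
      firstDiff (f (p s)) (f (p u)) ≤ firstDiff (f (p s)) (f (p t)) + L := by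
    intro s t u hst hsu
    have h1 := H (p s) (p t) (p u) (by rw [hd s t hst, hd s u hsu, one_mul])
    have h2 := region_lo (hfne s t hst) (hn _ (hp s))
    have h3 := region_hi (hfne s u hsu) (hn _ (hp s))
    have h4 : (1/2:ℝ)^(firstDiff (f (p s)) (f (p t)) + M) ≤
        2^(m+M) * (1/2:ℝ)^(firstDiff (f (p s)) (f (p u))) := by
      refine h2.trans (h1.trans ?_)
      rw [pow_add, mul_assoc]
      exact mul_le_mul hm h3 (D_nonneg _ _) (by positivity)
    have := exp_cmp h4
    omega
  have step2 : ∀ s t u w, s ≠ t → u ≠ w →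
      firstDiff (f (p s)) (f (p t)) ≤ firstDiff (f (p u)) (f (p w)) + 2 * L := by
    intro s t u w hst huw
    rcases eq_or_ne s u with rfl | hsu
    · have := step s w t huw hst
      omega
    · have h1 := step s u t hsu hst
      have h2 := step u w s huw hsu.symm
      rw [firstDiff_comm (f (p u)) (f (p s))] at h2
      omega
  have hs : (fun _ : Fin (b n) => false) ≠ (fun _ => true) := by
    intro hh
    have := congrFun hh ⟨0, h0⟩
    simp at this
  obtain ⟨v0, hv0⟩ : ∃ v0, v0 = firstDiff (f (p fun _ => false)) (f (p fun _ => true)) := ⟨_, rfl⟩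
  let F : (Fin (b n) → Bool) → (Fin (4 * L + 1) → Bool) :=
    fun s i => f (p s) (v0 - 2 * L + i)
  have hF : Function.Injective F := by
    intro s t hst
    by_contra hne
    have h1 := step2 s t _ _ hne hs
    have h2 := step2 _ _ s t hs hne
    rw [← hv0] at h1 h2
    have h3 := congrFun hst ⟨firstDiff (f (p s)) (f (p t)) - (v0 - 2 * L), by omega⟩
    apply fd_ne (hfne s t hne)
    simp only [F] at h3
    have h4 : v0 - 2 * L + (firstDiff (f (p s)) (f (p t)) - (v0 - 2 * L)) =
      firstDiff (f (p s)) (f (p t)) := by omega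
    rwa [h4] at h3
  have hc := Fintype.card_le_of_injective F hF
  simp only [Fintype.card_fun, Fintype.card_bool, Fintype.card_fin] at hc
  exact (Nat.pow_le_pow_iff_right (by norm_num)).1 hc

lemma core_a (f : P ≃ P) (h : WQf (D a b c) (D a' b' c') f) (M : ℕ) :
    ∃ B, ∀ n, (∀ x, inP n x → Rg a' b' c' M (f x)) → a n ≤ B := by
  obtain ⟨δ, hδ, H⟩ := h.2 ((1/2:ℝ)^(2*M+1)) (by positivity)
  obtain ⟨B, hB⟩ := exists_nat_gt (2 / δ)
  refine ⟨B, fun n hn => ?_⟩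
  by_contra hlt
  push Not at hlt
  obtain ⟨p, hp, hd, hl⟩ := bad_chain (a := a) (b := b) (c := c) n
  obtain ⟨N, hN⟩ : ∃ N, 2^(a n) = N + 1 := ⟨2^(a n) - 1, by have := Nat.one_le_two_pow (n := a n); omega⟩
  have hNa : a n ≤ N := by have := Nat.lt_two_pow_self (n := a n); omega
  have hNpos : 0 < N := by omega
  have hNδ : 2 ≤ N * δ := by
    have : (2:ℝ) / δ ≤ N := hB.le.trans (by exact_mod_cast (by omega : B ≤ N))
    rwa [div_le_iff₀ hδ] at this
  obtain ⟨i, hi, hmin⟩ := Finset.exists_min_image (Finset.range N)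
    (fun i => firstDiff (f (p i)) (f (p (i+1)))) ⟨0, by simpa using hNpos⟩
  simp only [Finset.mem_range] at hi hmin
  set v := firstDiff (f (p i)) (f (p (i+1))) with hv
  have hcon : ∀ j ≤ N, ∀ l < v, f (p j) l = f (p 0) l := by
    intro j
    induction j with
    | zero => intros; rfl
    | succ j ih =>
      intro hj l hl
      rw [← ih (by omega) l hl]
      exact (fd_lt _ _ l (lt_of_lt_of_le hl (hmin j (by omega)))).symm
  set η := (1/2:ℝ)^(n+1+a n) with hη
  have hηpos : 0 < η := by positivity
  obtain ⟨j, hj, hjd⟩ : ∃ j ≤ N, D a b c (p i) (p (i+1)) ≤ δ * D a b c (p i) (p j) := by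
    have h1 := (hd i (by omega)).2
    have h2 := hl N (by omega)
    have h3 := D_tri (a := a) (b := b) (c := c) (p 0) (p i) (p N)
    rw [D_comm (p 0) (p i)] at h3
    by_cases hc : N * η / 2 ≤ D a b c (p i) (p 0)
    · exact ⟨0, by omega, by nlinarith⟩
    · refine ⟨N, le_rfl, ?_⟩
      have h4 : N * η / 2 ≤ D a b c (p i) (p N) := by linarith
      nlinarith
  have h1 := H _ _ _ hjd
  have hne : f (p i) ≠ f (p (i+1)) := f.injective.ne (hd i (by omega)).1
  have h2 := region_lo hne (hn _ (hp i))
  have hne2 : f (p i) ≠ f (p j) := by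
    intro he
    rw [he, D_self, mul_zero, ← he] at h1
    exact absurd (D_pos hne) (not_lt.2 h1)
  have h3 := region_hi hne2 (hn _ (hp i))
  have h4 : v ≤ firstDiff (f (p i)) (f (p j)) :=
    le_fd hne2 (fun l hl => by rw [hcon i (by omega) l hl, hcon j hj l hl])
  have h5 : (1/2:ℝ)^(v+M) ≤ (1/2:ℝ)^(2*M+1) * (2^M * (1/2:ℝ)^v) := by
    refine h2.trans (h1.trans ?_)
    have := half_anti h4
    refine mul_le_mul_of_nonneg_left (h3.trans ?_) (by positivity)
    gcongr
  have h6 : (1/2:ℝ)^(2*M+1) * (2^M * (1/2:ℝ)^v) = (1/2:ℝ)^(v+M) * (1/2) := by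
    have : (1/2:ℝ)^M * 2^M = 1 := by rw [← mul_pow]; norm_num
    calc (1/2:ℝ)^(2*M+1) * (2^M * (1/2:ℝ)^v) = ((1/2:ℝ)^M * 2^M) * ((1/2)^(v+M) * (1/2)) := by ring
      _ = _ := by rw [this, one_mul]
  rw [h6] at h5
  have : (0:ℝ) < (1/2:ℝ)^(v+M) := by positivity
  linarith

lemma core_c (f : P ≃ P) (h : WQf (D a b c) (D a' b' c') f) (M : ℕ) :
    ∃ B, ∀ n, (∀ x, inP n x → Rg a' b' c' M (f x)) → c n ≤ B := by
  have hs : WQf (D a' b' c') (D a b c) f.symm := WQf.symm (m1 := mD a b c) (m2 := mD a' b' c') f h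
  obtain ⟨K, hK, H⟩ := hs.1 (2^(2*M+1)) (by positivity)
  obtain ⟨m, hm⟩ := exists_pow_ge K
  refine ⟨m, fun n hn => ?_⟩
  set z : P := fun _ => false with hz
  have hp : inP n (fl z n) := ⟨by simp [fl, hz], fun i hi => by rw [← fl_agree z (by omega)]⟩
  set p := fl z n with hpd
  have hR := hn p hp
  have hpz : p ≠ z := (fl_ne z n).symm
  have hfne : f p ≠ f z := f.injective.ne hpz
  set v := firstDiff (f p) (f z) with hv
  let W : ℕ → P := fun j => if j = 0 then f z else fl (f p) (v + j)
  have hWne : ∀ j, f p ≠ W j := by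
    intro j; simp only [W]; split_ifs
    · exact hfne
    · exact fl_ne _ _
  have hWfd : ∀ j, firstDiff (f p) (W j) = v + j := by
    intro j; simp only [W]; split_ifs with h0
    · rw [h0, add_zero]
    · exact fl_fd _ _
  have hlo : ∀ j, (1/2:ℝ)^(v+j+M) ≤ D a' b' c' (f p) (W j) := by
    intro j
    have := region_lo (hWne j) hR
    rwa [hWfd] at this
  have hhi : ∀ j, D a' b' c' (f p) (W j) ≤ 2^M * (1/2:ℝ)^(v+j) := by
    intro j
    have := region_hi (hWne j) hR
    rwa [hWfd] at this
  have hstep : ∀ j, D a b c p (f.symm (W j)) ≤ K * D a b c p (f.symm (W (j+1))) := by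
    intro j
    have := H (f p) (W j) (W (j+1)) (by
      refine (hhi j).trans (le_trans (le_of_eq ?_)
        (mul_le_mul_of_nonneg_left (hlo (j+1)) (by positivity)))
      have h1 : (1/2:ℝ)^M * 2^M = 1 := by rw [← mul_pow]; norm_num
      calc (2:ℝ)^M * (1/2:ℝ)^(v+j) = ((1/2:ℝ)^M * 2^M) * (2^M * (1/2:ℝ)^(v+j)) := by rw [h1, one_mul]
        _ = _ := by rw [show v + (j+1) + M = (v + j) + M + 1 by ring, pow_succ _ (v+j+M),
                      pow_add _ (v+j), pow_succ, two_mul, pow_add]; ring)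
    simpa using this
  obtain ⟨T, hT⟩ : ∃ T, T = n + 1 + a n := ⟨_, rfl⟩
  have h0 : (1/2:ℝ)^T ≤ D a b c p (f.symm (W 0)) := by
    rcases bad_gap (a := a) (b := b) (c := c) hp (f.symm (W 0)) with h1 | h1
    · have := h1.1.1
      simp [W, hz] at this
    · rwa [hT]
  have hJ : ∃ J, ¬ (1/2:ℝ)^T ≤ D a b c p (f.symm (W J)) := by
    obtain ⟨δ, hδ, H2⟩ := hs.2 ((1/2:ℝ)^(T+1)) (by positivity)
    have hD0 := D_pos (a := a') (b := b') (c := c') (hWne 0)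
    obtain ⟨J, hJ⟩ := exists_pow_lt_of_lt_one (show 0 < δ * D a' b' c' (f p) (W 0) / 2^M by positivity)
      (by norm_num : (1/2:ℝ) < 1)
    refine ⟨J, fun hle => ?_⟩
    have h1 := H2 (f p) (W J) (W 0) (by
      refine (hhi J).trans ?_
      rw [lt_div_iff₀ (by positivity)] at hJ
      have := half_anti (show J ≤ v + J by omega)
      nlinarith [show (0:ℝ) < 2^M by positivity])
    rw [Equiv.symm_apply_apply] at h1
    have h2 := D_le_one (a := a) (b := b) (c := c) p (f.symm (W 0))
    have h3 : (1/2:ℝ)^T ≤ (1/2:ℝ)^(T+1) :=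
      hle.trans (h1.trans (mul_le_of_le_one_right (by positivity) h2))
    rw [half_le_iff] at h3
    omega
  obtain ⟨j, hj1, hj2⟩ : ∃ j, (1/2:ℝ)^T ≤ D a b c p (f.symm (W j)) ∧
      ¬ (1/2:ℝ)^T ≤ D a b c p (f.symm (W (j+1))) := by
    by_contra hh
    push Not at hh
    obtain ⟨J, hJ⟩ := hJ
    apply hJ
    clear hJ
    induction J with
    | zero => exact h0
    | succ J ih => exact hh J ih
  rcases bad_gap (a := a) (b := b) (c := c) hp (f.symm (W (j+1))) with h1 | h1
  · have h2 : (1/2:ℝ)^T ≤ 2^m * (1/2:ℝ)^(T + c n) := by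
      refine hj1.trans ((hstep j).trans ?_)
      rw [hT]
      exact mul_le_mul hm h1.2 (D_nonneg _ _) (by positivity)
    have := exp_cmp h2
    omega
  · rw [← hT] at h1
    exact absurd h1 hj2


/-- case of a fixed point at zero: Hoelder type estimate for the piece index -/
lemma holder (f : P ≃ P) (h : WQf (D a b c) (D a' b' c') f)
    (h0 : f (fun _ => false) = fun _ => false) :
    ∃ C, ∀ n x, inP n x → inP (fe (f x)) (f x) ∧ fe (f x) ≤ C * (n + 1) := by
  obtain ⟨z, hz⟩ : ∃ z : P, z = fun _ => false := ⟨_, rfl⟩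
  rw [← hz] at h0
  have hzD : ∀ (a b c : ℕ → ℕ) n x, inP n x → D a b c z x = (1/2:ℝ)^n := by
    intro a b c n x hx
    have hfd : firstDiff z x = n := fd_eq (by rw [hx.1, hz]; simp) (fun i hi => by rw [hx.2 i hi, hz])
    rw [D_zero_case _ (by rw [hz]; simp), hfd]
    intro he
    have := hx.1
    rw [← he, hz] at this
    simp at this
  have hne : ∀ n x, inP n x → inP (fe (f x)) (f x) := by
    intro n x hx
    apply inP_of_ne
    by_contra hh
    push Not at hh
    have : f x = f z := by
      rw [h0, hz]; funext i; simpa using hh i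
    have := f.injective this
    have h2 := hx.1
    rw [this, hz] at h2
    simp at h2
  obtain ⟨K, hK, H⟩ := h.1 2 (by norm_num)
  obtain ⟨m, hm⟩ := exists_pow_ge K
  have step : ∀ n n' x x', inP n x → inP n' x' → n' ≤ n + 1 → fe (f x') ≤ fe (f x) + m := by
    intro n n' x x' hx hx' hnn
    have h1 := H z x x' (by
      rw [hzD _ _ _ n x hx, hzD _ _ _ n' x' hx']
      have := half_anti hnn
      rw [pow_succ] at this
      linarith)
    rw [h0, hzD _ _ _ _ _ (hne n x hx), hzD _ _ _ _ _ (hne n' x' hx')] at h1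
    apply exp_cmp
    refine h1.trans ?_
    gcongr
  have hfl : ∀ n, inP n (fl z n) := fun n =>
    ⟨by simp [fl, hz], fun i hi => by rw [← fl_agree z (by omega), hz]⟩
  have hind : ∀ n, fe (f (fl z n)) ≤ fe (f (fl z 0)) + n * m := by
    intro n
    induction n with
    | zero => simp
    | succ n ih =>
      have := step n (n+1) _ _ (hfl n) (hfl (n+1)) le_rfl
      rw [add_mul]; omega
  refine ⟨fe (f (fl z 0)) + m, fun n x hx => ⟨hne n x hx, ?_⟩⟩
  have h1 := step n n _ _ (hfl n) hx (by omega)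
  have h2 := hind n
  nlinarith

lemma claim (f : P ≃ P) (h : WQf (D a b c) (D a' b' c') f) (κ κ' : ℕ → ℕ)
    (ha : ∀ n, a' n ≤ κ' n) (hb : ∀ n, b' n ≤ κ' n) (hc : ∀ n, c' n ≤ κ' n)
    (hH : ∀ k0, ∃ k ≥ k0, κ ((k+1).factorial) = k ∧
      ∀ n, κ' n ≠ 0 → ∃ j, j ≠ k ∧ n = (j+1).factorial) :
    ∃ M, ∀ k0, ∃ k ≥ k0, κ ((k+1).factorial) = k ∧
      ∀ x, inP ((k+1).factorial) x → Rg a' b' c' M (f x) := by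
  by_cases h0 : f (fun _ => false) = fun _ => false
  · have hs : WQf (D a' b' c') (D a b c) f.symm :=
      WQf.symm (m1 := mD a b c) (m2 := mD a' b' c') f h
    obtain ⟨C, hC⟩ := holder f h h0
    obtain ⟨C', hC'⟩ := holder f.symm hs (by rw [Equiv.symm_apply_eq, h0])
    refine ⟨0, fun k0 => ?_⟩
    obtain ⟨k, hk, hk1, hk2⟩ := hH (k0 + 2 * C + 2 * C' + 1)
    refine ⟨k, by omega, hk1, fun x hx => ?_⟩
    suffices hs : κ' (fe (f x)) = 0 by
      refine ⟨?_, ?_, ?_⟩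
      · exact (ha _).trans hs.le
      · exact (hb _).trans hs.le
      · exact (hc _).trans hs.le
    by_contra hne
    obtain ⟨j, hjk, hj⟩ := hk2 _ hne
    obtain ⟨h1, h2⟩ := hC _ x hx
    obtain ⟨-, h3⟩ := hC' _ _ h1
    rw [Equiv.symm_apply_apply, hx.fe] at h3
    rw [hj] at h2 h3
    have hjp := Nat.factorial_pos (j+1)
    have hkp := Nat.factorial_pos (k+1)
    rcases lt_or_gt_of_ne hjk with hlt | hlt
    · have h4 : (j+1).factorial ≤ k.factorial := Nat.factorial_le (by omega)
      rw [Nat.factorial_succ k] at h3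
      have h5 : (k+1) * (j+1).factorial ≤ (2 * C') * (j+1).factorial := by nlinarith
      have := Nat.le_of_mul_le_mul_right h5 hjp
      omega
    · have h4 : (k+2).factorial ≤ (j+1).factorial := Nat.factorial_le (by omega)
      rw [Nat.factorial_succ (k+1)] at h4
      have h5 : (k+1+1) * (k+1).factorial ≤ (2 * C) * (k+1).factorial := by nlinarith
      have := Nat.le_of_mul_le_mul_right h5 hkp
      omega
  · obtain ⟨z, hz⟩ : ∃ z : P, z = fun _ => false := ⟨_, rfl⟩
    rw [← hz] at h0
    have hq : inP (fe (f z)) (f z) := by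
      apply inP_of_ne
      by_contra hh
      push Not at hh
      apply h0
      rw [hz]; funext i; simpa [hz] using hh i
    obtain ⟨n', hn'⟩ : ∃ n', n' = fe (f z) := ⟨_, rfl⟩
    rw [← hn'] at hq
    obtain ⟨δ, hδ, H⟩ := h.2 ((1/2:ℝ)^(g a' b' c' (f z) (n'+1) + 1)) (by positivity)
    obtain ⟨N, hN⟩ := exists_pow_lt_of_lt_one hδ (by norm_num : (1/2:ℝ) < 1)
    refine ⟨κ' n', fun k0 => ?_⟩
    obtain ⟨k, hk, hk1, hk2⟩ := hH (k0 + N)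
    refine ⟨k, by omega, hk1, fun x hx => ?_⟩
    have hzx : z ≠ x := by
      intro he
      have := hx.1
      rw [← he, hz] at this
      simp at this
    have hfd : firstDiff z x = (k+1).factorial :=
      fd_eq (by rw [hx.1, hz]; simp) (fun i hi => by rw [hx.2 i hi, hz])
    have h1 := H z x (fl z 0) (by
      rw [D_zero_case hzx (by rw [hz]; simp), D_zero_case (fl_ne z 0) (by rw [hz]; simp), fl_fd, hfd]
      have := Nat.self_le_factorial (k+1)
      have := half_anti (show N ≤ (k+1).factorial by omega)
      simp only [pow_zero, mul_one]
      linarith)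
    have h2 : f z ≠ f x := f.injective.ne hzx
    have h3 := bt_le_D (a := a') (b := b') (c := c') (f z) (f x)
    rw [bt_ne h2] at h3
    have h4 := D_le_one (a := a') (b := b') (c := c') (f z) (f (fl z 0))
    have h5 := h3.trans (h1.trans (mul_le_of_le_one_right (by positivity) h4))
    rw [half_le_iff] at h5
    have h6 : n' + 1 ≤ firstDiff (f z) (f x) := by
      by_contra hh
      have := g_mono (a := a') (b := b') (c := c') (f z) (show firstDiff (f z) (f x) ≤ n' + 1 by omega)
      omega
    have h7 : inP n' (f x) := hq.congr (fun i hi => fd_lt _ _ i (by omega))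
    unfold Rg
    rw [h7.fe]
    exact ⟨ha _, hb _, hc _⟩

end

/-- parameter switch -/
def sw (t : Bool) (κ : ℕ → ℕ) : ℕ → ℕ := fun n => if t then 0 else κ n

lemma sw_le (t : Bool) (κ : ℕ → ℕ) (n : ℕ) : sw t κ n ≤ κ n := by
  unfold sw; split_ifs <;> omega

def mT (u v w : Bool) (κ : ℕ → ℕ) : MetricSpace P := mD (sw v κ) (sw u κ) (sw w κ)

lemma not_WQ (u v w : Bool) (huvw : (u, v, w) ≠ (true, true, true)) (κ κ' : ℕ → ℕ)
    (hH : ∀ k0, ∃ k ≥ k0, κ ((k+1).factorial) = k ∧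
      ∀ n, κ' n ≠ 0 → ∃ j, j ≠ k ∧ n = (j+1).factorial) :
    ¬ WQ (mT u v w κ) (mT u v w κ') := by
  rintro ⟨f, hf⟩
  have hf' : WQf (D (sw v κ) (sw u κ) (sw w κ)) (D (sw v κ') (sw u κ') (sw w κ')) f := hf
  obtain ⟨M, hM⟩ := claim f hf' κ κ' (sw_le _ _) (sw_le _ _) (sw_le _ _) hH
  have fin : ∀ t : Bool, t = false → (∃ B, ∀ n, (∀ x, inP n x →
      Rg (sw v κ') (sw u κ') (sw w κ') M (f x)) → sw t κ n ≤ B) → False := by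
    rintro t rfl ⟨B, hB⟩
    obtain ⟨k, hk, hk1, hk2⟩ := hM (B+1)
    have := hB _ hk2
    simp only [sw, hk1] at this
    simp at this
    omega
  cases hv : v
  · exact fin v hv (core_a f hf' M)
  cases hu : u
  · exact fin u hu (core_b f hf' M)
  cases hw : w
  · exact fin w hw (core_c f hf' M)
  simp_all

lemma sw_unb {κ : ℕ → ℕ} (h : ∀ k, ∃ n, k ≤ κ n) : ∀ k, ∃ n, k ≤ sw false κ n := by
  simpa [sw] using h

lemma hasType_mT (u v w : Bool) {κ : ℕ → ℕ} (h : ∀ k, ∃ n, k ≤ κ n) :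
    @HasType P (mT u v w κ) u v w := by
  refine ⟨?_, ?_, ?_⟩
  · cases u
    · exact iff_of_false (doubling_neg (sw_unb h)) (by simp)
    · exact iff_of_true (doubling_pos (by simp [sw])) rfl
  · cases v
    · exact iff_of_false (ud_neg (sw_unb h)) (by simp)
    · exact iff_of_true (ud_pos (by simp [sw])) rfl
  · cases w
    · exact iff_of_false (up_neg (sw_unb h)) (by simp)
    · exact iff_of_true (up_pos (by simp [sw])) rfl

/-! the family -/

def inS (A : P) (j : ℕ) : Prop := decide (j % 2 = 1) = A (Nat.unpair (j/2)).1

open Classical in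
def kap (A : P) (n : ℕ) : ℕ :=
  if h : ∃ j, n = (j+1).factorial ∧ inS A j then h.choose else 0

lemma kap_fact {A : P} {j : ℕ} (h : inS A j) : kap A ((j+1).factorial) = j := by
  have hex : ∃ j', (j+1).factorial = (j'+1).factorial ∧ inS A j' := ⟨j, rfl, h⟩
  unfold kap
  rw [dif_pos hex]
  have := hex.choose_spec.1
  have := (Nat.factorial_inj' (n := j+1) (m := hex.choose + 1))
  rcases Nat.eq_zero_or_pos j with rfl | hj
  · by_contra hne
    have h2 : 1 < hex.choose + 1 := by omega
    have h3 := (Nat.factorial_lt (by norm_num)).2 h2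
    omega
  · have := Nat.factorial_inj (n := j+1) (m := hex.choose + 1) (by omega) |>.1 (by assumption)
    omega

lemma kap_ne {A : P} {n : ℕ} (h : kap A n ≠ 0) : ∃ j, inS A j ∧ n = (j+1).factorial := by
  unfold kap at h
  split_ifs at h with hex
  · obtain ⟨j, h1, h2⟩ := hex
    exact ⟨j, h2, h1⟩
  · exact absurd rfl h

def ix (e : Bool) (i m : ℕ) : ℕ := 2 * Nat.pair i m + (if e then 1 else 0)

lemma inS_ix (A : P) (e : Bool) (i m : ℕ) : inS A (ix e i m) ↔ e = A i := by
  have h1 : ix e i m / 2 = Nat.pair i m := by unfold ix; split_ifs <;> omega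
  have h2 : decide (ix e i m % 2 = 1) = e := by
    unfold ix; cases e <;> simp <;> omega
  unfold inS
  rw [h1, h2, Nat.unpair_pair]

lemma le_ix (e : Bool) (i m : ℕ) : m ≤ ix e i m := by
  have := Nat.right_le_pair i m
  unfold ix; omega

lemma kap_unb (A : P) (k : ℕ) : ∃ n, k ≤ kap A n :=
  ⟨_, (le_ix (A 0) 0 k).trans (kap_fact ((inS_ix A (A 0) 0 k).2 rfl)).ge⟩

lemma kap_H {A B : P} (h : A ≠ B) : ∀ k0, ∃ k ≥ k0, kap A ((k+1).factorial) = k ∧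
      ∀ n, kap B n ≠ 0 → ∃ j, j ≠ k ∧ n = (j+1).factorial := by
  intro k0
  obtain ⟨i, hi⟩ := Function.ne_iff.1 h
  refine ⟨ix (A i) i k0, le_ix _ _ _, kap_fact ((inS_ix _ _ _ _).2 rfl), fun n hn => ?_⟩
  obtain ⟨j, h1, h2⟩ := kap_ne hn
  refine ⟨j, ?_, h2⟩
  rintro rfl
  exact hi ((inS_ix _ _ _ _).1 h1)

/-! cardinality -/

abbrev Sub (u v w : Bool) := {m : MetricSpace (ℕ → Bool) //
        metricTopology m = Pi.topologicalSpace ∧ @HasType (ℕ → Bool) m u v w}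

lemma WQ_of_gen {u v w : Bool} {m1 m2 : Sub u v w}
    (h : Relation.EqvGen (fun m₁ m₂ : Sub u v w => QSEquiv (ℕ → Bool) (ℕ → Bool) m₁.1 m₂.1) m1 m2) :
    WQ m1.1 m2.1 := by
  induction h with
  | rel _ _ h => exact WQ_of_QS h
  | refl _ => exact WQ.refl _
  | symm _ _ _ ih => exact ih.symm
  | trans _ _ _ _ _ ih1 ih2 => exact ih1.trans ih2

lemma dist_cont {m : MetricSpace P} (h : metricTopology m = Pi.topologicalSpace) :
    Continuous (fun p : P × P => dd m p.1 p.2) := by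
  have h1 := @continuous_dist P m.toPseudoMetricSpace
  have h2 : m.toPseudoMetricSpace.toUniformSpace.toTopologicalSpace = Pi.topologicalSpace := h
  rw [h2] at h1
  exact h1

lemma upper (u v w : Bool) : Cardinal.mk (Sub u v w) ≤ Cardinal.continuum := by
  let F : Sub u v w → (ℕ × ℕ → ℝ) := fun m p =>
    dd m.1 (TopologicalSpace.denseSeq P p.1) (TopologicalSpace.denseSeq P p.2)
  have hF : Function.Injective F := by
    intro m1 m2 he
    have h1 := dist_cont m1.2.1
    have h2 := dist_cont m2.2.1
    have hd := (TopologicalSpace.denseRange_denseSeq P).prodMap (TopologicalSpace.denseRange_denseSeq P)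
    have h3 := hd.equalizer h1 h2 (by funext p; exact congrFun he p)
    apply Subtype.ext
    apply MetricSpace.ext
    ext x y
    exact congrFun h3 (x, y)
  refine (Cardinal.mk_le_of_injective hF).trans (le_of_eq ?_)
  simp [Cardinal.mk_real]
end QS

open QS
theorem statement_0 (u v w : Bool) (h : (u, v, w) ≠ (true, true, true)) :
    Cardinal.mk (Quot fun (m₁ m₂ : {m : MetricSpace (ℕ → Bool) //
        metricTopology m = Pi.topologicalSpace ∧ @HasType (ℕ → Bool) m u v w}) =>
        QSEquiv (ℕ → Bool) (ℕ → Bool) m₁.1 m₂.1) = Cardinal.continuum := by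
  apply le_antisymm
  · exact Cardinal.mk_quot_le.trans (upper u v w)
  · let G : P → Sub u v w := fun A => ⟨mT u v w (kap A), top_eq, hasType_mT u v w (kap_unb A)⟩
    have hc : Cardinal.mk P = Cardinal.continuum := by simp
    rw [← hc]
    apply Cardinal.mk_le_of_injective (f := fun A => Quot.mk _ (G A))
    intro A B hAB
    by_contra hne
    exact not_WQ u v w h _ _ (kap_H hne) (WQ_of_gen (Quot.eqvGen_exact hAB))

end
end

section
/- For every triple (u,v,w) ∈ {0,1}³ with (u,v,w) ≠ (1,1,1), there exists a metric d on 2^ℕ = (ℕ → {0,1}) inducing the product topology such that (2^ℕ, d) has type (u,v,w) and, for each of the three properties P ∈ {doubling, uniform disconnectedness, uniform perfectness} that (2^ℕ, d) fails, no point of 2^ℕ has a neighborhood that, as a metric subspace, satisfies P (i.e., S_P(2^ℕ,d) = 2^ℕ). -/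
open Metric Set
open scoped ENNReal NNReal

noncomputable section

namespace CantorTypes

open PiNat

/-- block metrics -/
def rho (k : ℕ) (i j : ℕ) : ℝ := if Even k then (if i = j then 0 else 1) else |(i : ℝ) - j|

def dm (n : ℕ → ℕ) (k : ℕ) : ℝ := if Even k then 1 else (n k : ℝ) - 1

def tt (n : ℕ → ℕ) (ε : ℕ → ℝ) : ℕ → ℝ
  | 0 => 1
  | k + 1 => ε k * tt n ε k / dm n (k + 1)

def DD (n : ℕ → ℕ) (ε : ℕ → ℝ) (x y : ∀ k, Fin (n k)) : ℝ :=
  tt n ε (firstDiff x y) * rho (firstDiff x y) (x (firstDiff x y)) (y (firstDiff x y))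

lemma rho_self (k i : ℕ) : rho k i i = 0 := by simp [rho]

lemma rho_comm (k i j : ℕ) : rho k i j = rho k j i := by
  simp only [rho, eq_comm (a := i), abs_sub_comm (i : ℝ)]

lemma rho_nonneg (k i j : ℕ) : 0 ≤ rho k i j := by
  unfold rho
  split_ifs <;> first | positivity | norm_num

lemma one_le_rho (k : ℕ) {i j : ℕ} (h : i ≠ j) : 1 ≤ rho k i j := by
  unfold rho
  split_ifs
  · exact le_refl _
  · have : (1 : ℤ) ≤ |(i : ℤ) - j| := by
      apply Int.one_le_abs
      omega
    exact_mod_cast this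

lemma rho_triangle (k i j l : ℕ) : rho k i l ≤ rho k i j + rho k j l := by
  unfold rho
  split_ifs <;> first | exact abs_sub_le _ _ _ | (norm_num; done) | omega

section
variable {n : ℕ → ℕ} {ε : ℕ → ℝ}

lemma one_le_dm (hn : ∀ k, 2 ≤ n k) (k : ℕ) : 1 ≤ dm n k := by
  unfold dm
  split_ifs
  · exact le_refl _
  · have : (2 : ℝ) ≤ n k := by exact_mod_cast hn k
    linarith

lemma rho_le_dm (hn : ∀ k, 2 ≤ n k) (k : ℕ) (i j : Fin (n k)) : rho k i j ≤ dm n k := by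
  unfold rho dm
  split_ifs
  · norm_num
  · norm_num
  · have h1 : ((i : ℕ) : ℝ) + 1 ≤ n k := by exact_mod_cast i.2
    have h2 : ((j : ℕ) : ℝ) + 1 ≤ n k := by exact_mod_cast j.2
    have h3 : (0 : ℝ) ≤ (i : ℕ) := by positivity
    have h4 : (0 : ℝ) ≤ (j : ℕ) := by positivity
    rw [abs_le]; constructor <;> linarith

lemma tt_pos (hn : ∀ k, 2 ≤ n k) (h0 : ∀ k, 0 < ε k) (k : ℕ) : 0 < tt n ε k := by
  induction k with
  | zero => simp [tt]
  | succ k ih =>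
    have := one_le_dm hn (k + 1)
    have := h0 k
    simp only [tt]
    positivity

lemma ss_succ (hn : ∀ k, 2 ≤ n k) (k : ℕ) :
    tt n ε (k + 1) * dm n (k + 1) = ε k * tt n ε k := by
  have := one_le_dm hn (k + 1)
  simp only [tt]
  field_simp

lemma ss_succ_le (hn : ∀ k, 2 ≤ n k) (h0 : ∀ k, 0 < ε k) (h1 : ∀ k, ε k ≤ 1 / 2) (k : ℕ) :
    tt n ε (k + 1) * dm n (k + 1) ≤ tt n ε k / 2 := by
  rw [ss_succ hn]
  have := tt_pos hn h0 k
  nlinarith [h1 k]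

lemma tt_le_ss (hn : ∀ k, 2 ≤ n k) (h0 : ∀ k, 0 < ε k) (k : ℕ) :
    tt n ε k ≤ tt n ε k * dm n k := by
  have := tt_pos hn h0 k
  nlinarith [one_le_dm hn k]

lemma tt_succ_le (hn : ∀ k, 2 ≤ n k) (h0 : ∀ k, 0 < ε k) (h1 : ∀ k, ε k ≤ 1 / 2) (k : ℕ) :
    tt n ε (k + 1) ≤ tt n ε k / 2 :=
  (tt_le_ss hn h0 _).trans (ss_succ_le hn h0 h1 k)

lemma ss_antitone (hn : ∀ k, 2 ≤ n k) (h0 : ∀ k, 0 < ε k) (h1 : ∀ k, ε k ≤ 1 / 2) :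
    Antitone (fun k => tt n ε k * dm n k) := by
  apply antitone_nat_of_succ_le
  intro k
  have := tt_pos hn h0 k
  linarith [ss_succ_le hn h0 h1 k, tt_le_ss hn h0 k]

lemma tt_antitone (hn : ∀ k, 2 ≤ n k) (h0 : ∀ k, 0 < ε k) (h1 : ∀ k, ε k ≤ 1 / 2) :
    Antitone (tt n ε) := by
  apply antitone_nat_of_succ_le
  intro k
  have := tt_pos hn h0 k
  linarith [tt_succ_le hn h0 h1 k]

lemma tt_le_pow (hn : ∀ k, 2 ≤ n k) (h0 : ∀ k, 0 < ε k) (h1 : ∀ k, ε k ≤ 1 / 2) (k : ℕ) :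
    tt n ε k ≤ (1 / 2) ^ k := by
  induction k with
  | zero => simp [tt]
  | succ k ih =>
    rw [pow_succ]
    linarith [tt_succ_le hn h0 h1 k]

lemma exists_ss_lt (hn : ∀ k, 2 ≤ n k) (h0 : ∀ k, 0 < ε k) (h1 : ∀ k, ε k ≤ 1 / 2)
    {r : ℝ} (hr : 0 < r) : ∃ k, tt n ε k * dm n k < r := by
  obtain ⟨k, hk⟩ := exists_pow_lt_of_lt_one hr (by norm_num : (1 / 2 : ℝ) < 1)
  refine ⟨k + 1, ?_⟩
  linarith [ss_succ_le hn h0 h1 k, tt_le_pow hn h0 h1 k, tt_pos hn h0 k]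

lemma DD_self (x : ∀ k, Fin (n k)) : DD n ε x x = 0 := by simp [DD, rho_self]

lemma DD_comm (x y : ∀ k, Fin (n k)) : DD n ε x y = DD n ε y x := by
  unfold DD
  rw [firstDiff_comm, rho_comm]

lemma DD_of_agree {x y : ∀ k, Fin (n k)} {k : ℕ} (h : ∀ i < k, x i = y i) (hk : x k ≠ y k) :
    DD n ε x y = tt n ε k * rho k (x k) (y k) := by
  have hxy : x ≠ y := fun h => hk (by rw [h])
  have : firstDiff x y = k := by
    apply le_antisymm
    · by_contra hlt
      exact hk (apply_eq_of_lt_firstDiff (by omega))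
    · by_contra hlt
      exact apply_firstDiff_ne hxy (h _ (by omega))
  unfold DD
  rw [this]

lemma DD_le_of_agree (hn : ∀ k, 2 ≤ n k) (h0 : ∀ k, 0 < ε k) (h1 : ∀ k, ε k ≤ 1 / 2)
    {x y : ∀ k, Fin (n k)} {k : ℕ} (h : ∀ i < k, x i = y i) :
    DD n ε x y ≤ tt n ε k * dm n k := by
  by_cases hxy : x = y
  · subst hxy
    rw [DD_self]
    exact (tt_pos hn h0 k).le.trans (tt_le_ss hn h0 k)
  · have hk : k ≤ firstDiff x y := by
      by_contra hlt
      exact apply_firstDiff_ne hxy (h _ (by omega))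
    refine le_trans ?_ (ss_antitone hn h0 h1 hk)
    exact mul_le_mul_of_nonneg_left (rho_le_dm hn _ _ _) (tt_pos hn h0 _).le

lemma agree_of_DD_lt (hn : ∀ k, 2 ≤ n k) (h0 : ∀ k, 0 < ε k) (h1 : ∀ k, ε k ≤ 1 / 2)
    {x y : ∀ k, Fin (n k)} {k : ℕ} (h : DD n ε x y < tt n ε k) : ∀ i ≤ k, x i = y i := by
  intro i hi
  by_contra hne
  have hxy : x ≠ y := fun h => hne (by rw [h])
  have hk : firstDiff x y ≤ k := by
    by_contra hlt
    exact hne (apply_eq_of_lt_firstDiff (by omega))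
  have h2 := tt_antitone hn h0 h1 hk
  have h3 : 1 ≤ rho (firstDiff x y) (x (firstDiff x y)) (y (firstDiff x y)) :=
    one_le_rho _ (fun h => apply_firstDiff_ne hxy (Fin.ext h))
  have := tt_pos hn h0 (firstDiff x y)
  unfold DD at h
  nlinarith

lemma DD_nonneg (hn : ∀ k, 2 ≤ n k) (h0 : ∀ k, 0 < ε k) (x y : ∀ k, Fin (n k)) :
    0 ≤ DD n ε x y := mul_nonneg (tt_pos hn h0 _).le (rho_nonneg _ _ _)

lemma eq_of_DD (hn : ∀ k, 2 ≤ n k) (h0 : ∀ k, 0 < ε k) (h1 : ∀ k, ε k ≤ 1 / 2)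
    {x y : ∀ k, Fin (n k)} (h : DD n ε x y ≤ 0) : x = y := by
  funext k
  exact agree_of_DD_lt hn h0 h1 (h.trans_lt (tt_pos hn h0 k)) k le_rfl

lemma DD_triangle (hn : ∀ k, 2 ≤ n k) (h0 : ∀ k, 0 < ε k) (h1 : ∀ k, ε k ≤ 1 / 2)
    (x y z : ∀ k, Fin (n k)) : DD n ε x z ≤ DD n ε x y + DD n ε y z := by
  by_cases hxz : x = z
  · subst hxz
    rw [DD_self]
    exact add_nonneg (DD_nonneg hn h0 _ _) (DD_nonneg hn h0 _ _)
  set k := firstDiff x z with hk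
  have hkne : x k ≠ z k := apply_firstDiff_ne hxz
  have hag : ∀ i < k, x i = z i := fun i hi => apply_eq_of_lt_firstDiff hi
  by_cases hy : ∀ i < k, x i = y i
  · have hy' : ∀ i < k, y i = z i := fun i hi => (hy i hi).symm.trans (hag i hi)
    rw [DD_of_agree hag hkne]
    have A : tt n ε k * rho k (x k) (y k) ≤ DD n ε x y := by
      by_cases h : x k = y k
      · rw [h, rho_self, mul_zero]
        exact DD_nonneg hn h0 _ _
      · rw [DD_of_agree hy h]
    have B : tt n ε k * rho k (y k) (z k) ≤ DD n ε y z := by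
      by_cases h : y k = z k
      · rw [h, rho_self, mul_zero]
        exact DD_nonneg hn h0 _ _
      · rw [DD_of_agree hy' h]
    have := mul_le_mul_of_nonneg_left (rho_triangle k (x k) (y k) (z k)) (tt_pos hn h0 k).le
    linarith
  · push Not at hy
    obtain ⟨i, hi, hne⟩ := hy
    have A : tt n ε i ≤ DD n ε x y := by
      by_contra hlt
      exact hne (agree_of_DD_lt hn h0 h1 (not_le.mp hlt) i le_rfl)
    have B := DD_le_of_agree hn h0 h1 (x := x) (y := z) (k := i + 1)
      (fun j hj => hag j (by omega))
    have := ss_succ_le hn h0 h1 i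
    have := tt_pos hn h0 i
    linarith [DD_nonneg hn h0 y z]

/-- finite block doubling -/
lemma block_doubling {k : ℕ} (hk : Even k → n k = 2) (a : Fin (n k)) (R : ℝ) (hR : 0 ≤ R) :
    ∃ c : Finset (Fin (n k)), c.card ≤ 3 ∧
      ∀ b : Fin (n k), rho k a b ≤ R → ∃ a' ∈ c, rho k a' b ≤ R / 2 := by
  by_cases he : Even k
  · refine ⟨Finset.univ, by simp [hk he], fun b _ => ⟨b, Finset.mem_univ _, ?_⟩⟩
    rw [rho_self]; linarith
  · have ha := a.2
    set h := ⌊R / 2⌋₊ with hh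
    have hfl : (h : ℝ) ≤ R / 2 := Nat.floor_le (by linarith)
    have hfu : R / 2 < h + 1 := Nat.lt_floor_add_one _
    have key : ∀ i j : ℕ, i ≤ j + h → j ≤ i + h → rho k i j ≤ R / 2 := by
      intro i j h1 h2
      simp only [rho, he, if_false]
      have h1' : (i : ℝ) ≤ j + h := by exact_mod_cast h1
      have h2' : (j : ℝ) ≤ i + h := by exact_mod_cast h2
      rw [abs_le]; constructor <;> linarith
    refine ⟨{a, ⟨min (a + h + 1) (n k - 1), by omega⟩, ⟨a - (h + 1), by omega⟩},
      Finset.card_le_three, ?_⟩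
    intro b hb
    have hb2 := b.2
    simp only [rho, he, if_false] at hb
    rw [abs_le] at hb
    have h1 : (b : ℕ) < (a : ℕ) + 2 * h + 2 := by
      have : ((b : ℕ) : ℝ) < (a : ℕ) + 2 * h + 2 := by linarith
      exact_mod_cast this
    have h2 : (a : ℕ) < (b : ℕ) + 2 * h + 2 := by
      have : ((a : ℕ) : ℝ) < (b : ℕ) + 2 * h + 2 := by linarith
      exact_mod_cast this
    by_cases c1 : (b : ℕ) > a + h
    · refine ⟨⟨min (a + h + 1) (n k - 1), by omega⟩, by simp, key _ _ ?_ ?_⟩ <;> simp only <;> omega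
    by_cases c2 : (a : ℕ) > b + h
    · refine ⟨⟨a - (h + 1), by omega⟩, by simp, key _ _ ?_ ?_⟩ <;> simp only <;> omega
    · exact ⟨a, by simp, key _ _ (by omega) (by omega)⟩

lemma block_perfect (hn : ∀ k, 2 ≤ n k) (k : ℕ) (a : Fin (n k)) (R : ℝ) (hR : 1 ≤ R)
    (hR2 : R ≤ dm n k) : ∃ b : Fin (n k), b ≠ a ∧ R / 4 ≤ rho k a b ∧ rho k a b ≤ R := by
  have ha := a.2
  have hn' := hn k
  by_cases he : Even k
  · simp only [dm, he, if_true] at hR2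
    obtain ⟨b, hb⟩ : ∃ b : Fin (n k), b ≠ a := by
      haveI : Nontrivial (Fin (n k)) := Fin.nontrivial_iff_two_le.mpr hn'
      exact exists_ne a
    refine ⟨b, hb, ?_⟩
    have : (a : ℕ) ≠ b := fun h => hb (Fin.ext h.symm)
    simp only [rho, he, if_true, this, if_false]
    constructor <;> linarith
  · simp only [dm, he, if_false] at hR2
    set q := ⌊R⌋₊ with hq
    have hfl : (q : ℝ) ≤ R := Nat.floor_le (by linarith)
    have hfu : R < q + 1 := Nat.lt_floor_add_one _
    have hq1 : 1 ≤ q := Nat.one_le_floor_iff _ |>.mpr hR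
    have hqn : q + 1 ≤ n k := by
      have : (q : ℝ) + 1 ≤ n k := by linarith
      exact_mod_cast this
    set m := (q + 1) / 2 with hm
    have hmq : m ≤ q := by omega
    have hm2 : q ≤ 2 * m := by omega
    have hmq' : (m : ℝ) ≤ q := by exact_mod_cast hmq
    have hm2' : (q : ℝ) ≤ 2 * m := by exact_mod_cast hm2
    have hq1' : (1 : ℝ) ≤ q := by exact_mod_cast hq1
    by_cases c : (a : ℕ) + m < n k
    · refine ⟨⟨a + m, c⟩, ?_, ?_⟩
      · intro h
        have := congrArg Fin.val h
        simp only at this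
        omega
      · simp only [rho, he, if_false]
        push_cast
        rw [show ((a : ℕ) : ℝ) - ((a : ℕ) + m) = -m by ring, abs_neg, Nat.abs_cast]
        constructor <;> linarith
    · have c' : m ≤ (a : ℕ) := by omega
      refine ⟨⟨a - m, by omega⟩, ?_, ?_⟩
      · intro h
        have := congrArg Fin.val h
        simp only at this
        omega
      · simp only [rho, he, if_false]
        rw [Nat.cast_sub c']
        rw [show ((a : ℕ) : ℝ) - ((a : ℕ) - m) = m by ring, Nat.abs_cast]
        constructor <;> linarith

lemma update_agree (p : ∀ k, Fin (n k)) (k : ℕ) (a b : Fin (n k)) :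
    ∀ i < k, Function.update p k a i = Function.update p k b i := by
  intro i hi
  rw [Function.update_of_ne (by omega), Function.update_of_ne (by omega)]

lemma DD_update (p : ∀ k, Fin (n k)) (k : ℕ) (a b : Fin (n k)) :
    DD n ε (Function.update p k a) (Function.update p k b) = tt n ε k * rho k a b := by
  by_cases h : a = b
  · subst h
    rw [DD_self, rho_self, mul_zero]
  · rw [DD_of_agree (update_agree p k a b) (by simpa using h)]
    simp

section metric
variable {Y : Type*} [MetricSpace Y] {f : Y → ∀ k, Fin (n k)}

theorem doubling (hn : ∀ k, 2 ≤ n k) (h0 : ∀ k, 0 < ε k) (h1 : ∀ k, ε k ≤ 1 / 2)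
    (hd : ∀ x y, dist x y = DD n ε (f x) (f y)) (hf : Function.Surjective f)
    (he : ∀ k, Even k → n k = 2) : IsDoubling Y := by
  classical
  refine ⟨3, fun x r => ?_⟩
  rcases lt_trichotomy r 0 with hr | hr | hr
  · refine ⟨∅, by simp, ?_⟩
    rw [Metric.closedBall_eq_empty.mpr hr]
    simp
  · refine ⟨{x}, by simp, ?_⟩
    subst hr
    simp
  have hex : ∃ k, tt n ε k * dm n k ≤ r / 2 :=
    (exists_ss_lt hn h0 h1 (half_pos hr)).imp fun _ h => h.le
  by_cases hk0 : tt n ε 0 * dm n 0 ≤ r / 2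
  · refine ⟨{x}, by simp, ?_⟩
    intro y _
    simp only [Finset.mem_singleton, Set.mem_iUnion, exists_prop, exists_eq_left,
      Metric.mem_closedBall]
    rw [hd]
    exact (DD_le_of_agree hn h0 h1 (k := 0) (by simp)).trans hk0
  obtain ⟨j, hj1, hj2⟩ : ∃ j, r / 2 < tt n ε j * dm n j ∧
      tt n ε (j + 1) * dm n (j + 1) ≤ r / 2 := by
    have hs := Nat.find_spec hex
    have hm := fun i => Nat.find_min hex (m := i)
    cases h : Nat.find hex with
    | zero => rw [h] at hs; exact absurd hs hk0
    | succ j =>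
      rw [h] at hs
      exact ⟨j, not_le.mp (hm j (by omega)), hs⟩
  have htj := tt_pos hn h0 j
  obtain ⟨c, hc, hcov⟩ := block_doubling (n := n) (he j) (f x j) (r / tt n ε j) (by positivity)
  choose g hg using hf
  refine ⟨c.image (fun a => g (Function.update (f x) j a)), Finset.card_image_le.trans hc, ?_⟩
  intro y hy
  rw [Metric.mem_closedBall, dist_comm, hd] at hy
  have hag : ∀ i < j, f x i = f y i := by
    intro i hi
    obtain ⟨l, rfl⟩ : ∃ l, j = l + 1 := ⟨j - 1, by omega⟩
    refine agree_of_DD_lt hn h0 h1 (k := l) ?_ i (by omega)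
    have := ss_succ_le hn h0 h1 l
    linarith
  have hrho : rho j (f x j) (f y j) ≤ r / tt n ε j := by
    by_cases h : f x j = f y j
    · rw [h, rho_self]; positivity
    · rw [DD_of_agree hag h] at hy
      rw [le_div_iff₀ htj]; linarith
  obtain ⟨a, hac, hab⟩ := hcov _ hrho
  simp only [Finset.mem_image, Set.mem_iUnion, exists_prop, Metric.mem_closedBall]
  refine ⟨_, ⟨a, hac, rfl⟩, ?_⟩
  rw [dist_comm, hd, hg]
  have hag2 : ∀ i < j, Function.update (f x) j a i = f y i := by
    intro i hi
    rw [Function.update_of_ne (by omega)]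
    exact hag i hi
  by_cases h : a = f y j
  · refine le_trans (DD_le_of_agree hn h0 h1 (k := j + 1) ?_) hj2
    intro i hi
    rcases Nat.lt_succ_iff_lt_or_eq.mp hi with h' | rfl
    · exact hag2 i h'
    · simpa using h
  · rw [DD_of_agree hag2 (by simpa using h), Function.update_self]
    calc tt n ε j * rho j a (f y j) ≤ tt n ε j * (r / tt n ε j / 2) := by gcongr
      _ = r / 2 := by field_simp

theorem not_doubling (hn : ∀ k, 2 ≤ n k) (h0 : ∀ k, 0 < ε k) (h1 : ∀ k, ε k ≤ 1 / 2)
    (hd : ∀ x y, dist x y = DD n ε (f x) (f y)) (p : ∀ k, Fin (n k)) (K : ℕ)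
    (hp : ∀ q, (∀ i < K, p i = q i) → ∃ y, f y = q)
    (he : ∀ k, Even k → k < n k) : ¬ IsDoubling Y := by
  classical
  rintro ⟨N, hN⟩
  obtain ⟨k, hkK, hkN, hke⟩ : ∃ k, K ≤ k ∧ N ≤ k ∧ Even k :=
    ⟨2 * (K + N), by omega, by omega, even_two_mul _⟩
  have hz : ∀ a : Fin (n k), ∃ y, f y = Function.update p k a := fun a =>
    hp _ (fun i hi => by rw [Function.update_of_ne (by omega)])
  choose z hz using hz
  obtain ⟨c, hc, hcov⟩ := hN (z (p k)) (tt n ε k)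
  have hsurj : ∀ a : Fin (n k), a ∈ c.image (fun y => f y k) := by
    intro a
    have ha : z a ∈ Metric.closedBall (z (p k)) (tt n ε k) := by
      rw [Metric.mem_closedBall, hd, hz, hz, DD_update]
      have h2 : rho k a (p k) ≤ 1 := by
        have := rho_le_dm hn k a (p k)
        rwa [dm, if_pos hke] at this
      have := tt_pos hn h0 k
      nlinarith
    have := hcov ha
    simp only [Set.mem_iUnion, exists_prop, Metric.mem_closedBall] at this
    obtain ⟨y, hyc, hy⟩ := this
    rw [hd, hz] at hy
    have hlt : DD n ε (Function.update p k a) (f y) < tt n ε k := by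
      have := tt_pos hn h0 k
      linarith
    have := agree_of_DD_lt hn h0 h1 hlt k le_rfl
    rw [Function.update_self] at this
    exact Finset.mem_image.mpr ⟨y, hyc, this.symm⟩
  have h3 : (Finset.univ : Finset (Fin (n k))).card ≤ (c.image (fun y => f y k)).card :=
    Finset.card_le_card (fun a _ => hsurj a)
  rw [Finset.card_univ, Fintype.card_fin] at h3
  have h4 : (c.image (fun y => f y k)).card ≤ c.card := Finset.card_image_le
  have := he k hke
  omega

theorem ud (hn : ∀ k, 2 ≤ n k) (h0 : ∀ k, 0 < ε k) (h1 : ∀ k, ε k ≤ 1 / 2)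
    (hd : ∀ x y, dist x y = DD n ε (f x) (f y))
    (he : ∀ k, ¬ Even k → n k = 2) : IsUniformlyDisconnected Y := by
  have hfi : ∀ x y, f x = f y → x = y := by
    intro x y h
    rw [← dist_le_zero, hd, h, DD_self]
  refine ⟨1 / 2, by norm_num, by norm_num, ?_⟩
  intro N x hx
  by_cases h : x 0 = x N
  · intro i
    induction i with
    | zero => intro _; rfl
    | succ i ih =>
      intro hi
      have h2 := hx (i + 1) (by omega) hi
      rw [h, dist_self, mul_zero, dist_le_zero, Nat.add_sub_cancel] at h2
      rw [← h2]
      exact ih (by omega)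
  · exfalso
    have hne : f (x 0) ≠ f (x N) := fun h' => h (hfi _ _ h')
    set k := firstDiff (f (x 0)) (f (x N)) with hk
    have hdist : dist (x 0) (x N) ≤ tt n ε k := by
      rw [hd, DD]
      have h2 := rho_le_dm hn k (f (x 0) k) (f (x N) k)
      have h3 : dm n k = 1 := by
        unfold dm
        split_ifs with h4
        · rfl
        · rw [he k h4]; norm_num
      have := tt_pos hn h0 k
      rw [← hk]
      nlinarith
    have hall : ∀ i ≤ N, f (x i) k = f (x 0) k := by
      intro i
      induction i with
      | zero => intro _; rfl
      | succ i ih =>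
        intro hi
        have h2 := hx (i + 1) (by omega) hi
        rw [Nat.add_sub_cancel, hd] at h2
        rw [← ih (by omega)]
        refine (agree_of_DD_lt hn h0 h1 (k := k) ?_ k le_rfl).symm
        have := tt_pos hn h0 k
        linarith
    exact apply_firstDiff_ne hne (hall N le_rfl).symm

theorem not_ud (hn : ∀ k, 2 ≤ n k) (h0 : ∀ k, 0 < ε k)
    (hd : ∀ x y, dist x y = DD n ε (f x) (f y)) (p : ∀ k, Fin (n k)) (K : ℕ)
    (hp : ∀ q, (∀ i < K, p i = q i) → ∃ y, f y = q)
    (he : ∀ k, ¬ Even k → k < n k) : ¬ IsUniformlyDisconnected Y := by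
  rintro ⟨δ, hδ, -, hN⟩
  obtain ⟨M, hM⟩ := exists_nat_gt (1 / δ)
  obtain ⟨k, hkK, hkN, hke⟩ : ∃ k, K ≤ k ∧ M ≤ k ∧ ¬ Even k :=
    ⟨2 * (K + M) + 1, by omega, by omega, by simp⟩
  have hz : ∀ a : Fin (n k), ∃ y, f y = Function.update p k a := fun a =>
    hp _ (fun i hi => by rw [Function.update_of_ne (by omega)])
  choose z hz using hz
  have hnk := hn k
  have hnk' := he k hke
  have htk := tt_pos hn h0 k
  have hzd : ∀ a b, dist (z a) (z b) = tt n ε k * rho k a b := by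
    intro a b
    rw [hd, hz, hz, DD_update]
  have hlast := hN (n k - 1) (fun i => z ⟨min i (n k - 1), by omega⟩) ?_ (n k - 1) le_rfl
  · have h2 : dist (z ⟨min (n k - 1) (n k - 1), by omega⟩) (z ⟨min 0 (n k - 1), by omega⟩) = 0 := by
      rw [hlast, dist_self]
    rw [hzd] at h2
    have h3 : 1 ≤ rho k (min (n k - 1) (n k - 1)) (min 0 (n k - 1)) := one_le_rho k (by omega)
    nlinarith
  · intro i hi1 hi2
    rw [hzd, hzd]
    simp only [rho, hke, if_false]
    rw [min_eq_left hi2, min_eq_left (show i - 1 ≤ n k - 1 by omega),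
      min_eq_left (Nat.zero_le _), min_eq_left le_rfl, Nat.cast_sub hi1,
      Nat.cast_sub (show 1 ≤ n k by omega)]
    have h5 : (M : ℝ) ≤ n k - 1 := by
      have : (M : ℝ) + 1 ≤ n k := by exact_mod_cast (show M + 1 ≤ n k by omega)
      linarith
    have h6 : 1 < δ * M := by
      rw [div_lt_iff₀ hδ] at hM; linarith
    have h7 : δ * M ≤ δ * (n k - 1) := by gcongr
    rw [show (i : ℝ) - ((1 : ℕ) : ℝ) - i = -1 by push_cast; ring, abs_neg, abs_one,
      show ((0 : ℕ) : ℝ) - ((n k : ℝ) - ((1 : ℕ) : ℝ)) = -(n k - 1) by push_cast; ring, abs_neg]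
    have h8 := le_abs_self ((n k : ℝ) - 1)
    have h9 : δ * ((n k : ℝ) - 1) ≤ δ * |(n k : ℝ) - 1| := by gcongr
    have : tt n ε k * 1 ≤ tt n ε k * (δ * |(n k : ℝ) - 1|) := by gcongr; linarith
    linarith

theorem up (hn : ∀ k, 2 ≤ n k) (h1 : ∀ k, ε k = 1 / 2)
    (hd : ∀ x y, dist x y = DD n ε (f x) (f y)) (hf : Function.Surjective f) :
    IsUniformlyPerfect Y := by
  have h0 : ∀ k, 0 < ε k := fun k => by rw [h1]; norm_num
  have h1' : ∀ k, ε k ≤ 1 / 2 := fun k => (h1 k).le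
  refine ⟨1 / 8, by norm_num, by norm_num, ?_⟩
  intro x r hr hrd
  have hrs : r < tt n ε 0 * dm n 0 := by
    refine hrd.trans_le (Metric.diam_le_of_forall_dist_le ?_ ?_)
    · exact (tt_pos hn h0 0).le.trans (tt_le_ss hn h0 0)
    · intro a _ b _
      rw [hd]
      exact DD_le_of_agree hn h0 h1' (by simp)
  have hex : ∃ k, tt n ε k ≤ r :=
    (exists_ss_lt hn h0 h1' hr).imp fun k h => (tt_le_ss hn h0 k).trans h.le
  obtain ⟨k, hk1, hk2⟩ : ∃ k, tt n ε k ≤ r ∧ r / 2 ≤ tt n ε k * dm n k := by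
    have hs := Nat.find_spec hex
    have hm := fun i => Nat.find_min hex (m := i)
    cases h : Nat.find hex with
    | zero => rw [h] at hs; exact ⟨0, hs, by linarith⟩
    | succ j =>
      rw [h] at hs
      refine ⟨j + 1, hs, ?_⟩
      have := not_le.mp (hm j (by omega))
      rw [ss_succ hn, h1]
      linarith
  have htk := tt_pos hn h0 k
  obtain ⟨b, hb, hb1, hb2⟩ := block_perfect hn k (f x k) (min (r / tt n ε k) (dm n k))
    (le_min (by rwa [one_le_div htk]) (one_le_dm hn k)) (min_le_right _ _)
  obtain ⟨y, hy⟩ := hf (Function.update (f x) k b)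
  have hxy : dist y x = tt n ε k * rho k (f x k) b := by
    have := DD_update (ε := ε) (f x) k b (f x k)
    rw [Function.update_eq_self] at this
    rw [hd, hy, this, rho_comm]
  refine ⟨y, ?_, ?_⟩
  · rw [Metric.mem_closedBall, hxy]
    have := hb2.trans (min_le_left _ _)
    rw [le_div_iff₀ htk] at this
    linarith
  · rw [Metric.mem_ball, hxy, not_lt]
    have h2 : r / tt n ε k / 2 ≤ min (r / tt n ε k) (dm n k) := by
      apply le_min
      · have : 0 ≤ r / tt n ε k := by positivity
        linarith
      · rw [div_div, div_le_iff₀ (by positivity)]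
        linarith
    have h3 : r / tt n ε k / 8 ≤ rho k (f x k) b := by linarith
    calc 1 / 8 * r = tt n ε k * (r / tt n ε k / 8) := by field_simp
      _ ≤ _ := by gcongr

theorem not_up (hn : ∀ k, 2 ≤ n k) (h1 : ∀ k, ε k = 1 / (k + 2))
    (hd : ∀ x y, dist x y = DD n ε (f x) (f y)) (p : ∀ k, Fin (n k)) (K : ℕ)
    (hp : ∀ q, (∀ i < K, p i = q i) → ∃ y, f y = q) : ¬ IsUniformlyPerfect Y := by
  have h0 : ∀ k, 0 < ε k := fun k => by rw [h1]; positivity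
  have h1' : ∀ k, ε k ≤ 1 / 2 := fun k => by
    rw [h1]
    apply one_div_le_one_div_of_le (by norm_num)
    have : (0 : ℝ) ≤ k := by positivity
    linarith
  rintro ⟨ρ, hρ, -, hU⟩
  obtain ⟨M, hM⟩ := exists_nat_gt (2 / ρ)
  set k := K + M with hk
  have htk := tt_pos hn h0 k
  have hz : ∀ a : Fin (n k), ∃ y, f y = Function.update p k a := fun a =>
    hp _ (fun i hi => by rw [Function.update_of_ne (by omega)])
  choose z hz using hz
  obtain ⟨b, hb, hb1, -⟩ := block_perfect hn k (p k) 1 le_rfl (one_le_dm hn k)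
  have hdiam : tt n ε k / 2 < Metric.diam (Set.univ : Set Y) := by
    have h2 : dist (z b) (z (p k)) ≤ Metric.diam (Set.univ : Set Y) := by
      apply Metric.dist_le_diam_of_mem _ (Set.mem_univ _) (Set.mem_univ _)
      rw [Metric.isBounded_iff]
      refine ⟨tt n ε 0 * dm n 0, fun a _ b _ => ?_⟩
      rw [hd]
      exact DD_le_of_agree hn h0 h1' (by simp)
    have h3 : dist (z b) (z (p k)) = tt n ε k * rho k b (p k) := by
      rw [hd, hz, hz, DD_update]
    have h4 : 1 ≤ rho k b (p k) := one_le_rho k (fun h => hb (Fin.ext h))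
    nlinarith
  obtain ⟨y, hy1, hy2⟩ := hU (z (p k)) (tt n ε k / 2) (by positivity) hdiam
  rw [Metric.mem_closedBall, hd] at hy1
  rw [Metric.mem_ball, hd, not_lt] at hy2
  have hag := agree_of_DD_lt hn h0 h1' (k := k) (hy1.trans_lt (by linarith))
  have hle := DD_le_of_agree hn h0 h1' (k := k + 1) (fun i hi => hag i (by omega))
  rw [ss_succ hn, h1] at hle
  have h5 : 1 / ((k : ℝ) + 2) < ρ / 2 := by
    have h6 : (M : ℝ) ≤ k := by exact_mod_cast (show M ≤ k by omega)
    rw [div_lt_iff₀ hρ] at hM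
    rw [div_lt_iff₀ (by positivity)]
    nlinarith
  nlinarith

lemma cyl_aux (hn : ∀ k, 2 ≤ n k) (h0 : ∀ k, 0 < ε k) (h1 : ∀ k, ε k ≤ 1 / 2)
    (hd : ∀ x y, dist x y = DD n ε (f x) (f y)) (x : Y) (s : Set Y) (hs : s ∈ nhds x) :
    ∃ K, ∀ y, (∀ i < K, f x i = f y i) → y ∈ s := by
  obtain ⟨r, hr, hrs⟩ := Metric.mem_nhds_iff.mp hs
  obtain ⟨K, hK⟩ := exists_ss_lt hn h0 h1 hr
  refine ⟨K, fun y hy => hrs ?_⟩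
  rw [Metric.mem_ball, dist_comm, hd]
  exact (DD_le_of_agree hn h0 h1 hy).trans_lt hK

end metric

def mm (n : ℕ → ℕ) (ε : ℕ → ℝ) (hn : ∀ k, 2 ≤ n k) (h0 : ∀ k, 0 < ε k) (h1 : ∀ k, ε k ≤ 1 / 2)
    (e : (ℕ → Bool) ≃ (∀ k, Fin (n k))) : MetricSpace (ℕ → Bool) where
  dist x y := DD n ε (e x) (e y)
  dist_self x := DD_self _
  dist_comm x y := DD_comm _ _
  dist_triangle x y z := DD_triangle hn h0 h1 _ _ _
  eq_of_dist_eq_zero h := e.injective (eq_of_DD hn h0 h1 (le_of_eq h))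

lemma mm_cyl (hn : ∀ k, 2 ≤ n k) (h0 : ∀ k, 0 < ε k) (h1 : ∀ k, ε k ≤ 1 / 2)
    (e : (ℕ → Bool) ≃ (∀ k, Fin (n k))) (x : ℕ → Bool) (s : Set (ℕ → Bool))
    (hs : s ∈ @nhds _ (metricTopology (mm n ε hn h0 h1 e)) x) :
    ∃ K, ∀ y, (∀ i < K, e x i = e y i) → y ∈ s := by
  letI := mm n ε hn h0 h1 e
  exact cyl_aux (Y := ℕ → Bool) (f := e) hn h0 h1 (fun _ _ => rfl) x s hs

lemma t2_metric {X : Type*} (m : MetricSpace X) : @T2Space X (metricTopology m) := by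
  unfold metricTopology
  infer_instance

lemma top_eq {X : Type*} (t1 t2 : TopologicalSpace X) (hc : @CompactSpace X t1)
    (h2 : @T2Space X t2) (h : @Continuous X X t1 t2 id) : t2 = t1 := by
  have hh := (@isHomeomorph_iff_continuous_bijective X X t1 t2 id hc h2).mpr
    ⟨h, Function.bijective_id⟩
  have := @Topology.IsInducing.eq_induced X X t1 t2 id
    (@IsHomeomorph.isInducing X X t1 t2 id hh)
  rw [this, induced_id]

lemma mm_top (hn : ∀ k, 2 ≤ n k) (h0 : ∀ k, 0 < ε k) (h1 : ∀ k, ε k ≤ 1 / 2)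
    (e : (ℕ → Bool) ≃ (∀ k, Fin (n k))) (he : ∀ k, Continuous (fun y => e y k)) :
    metricTopology (mm n ε hn h0 h1 e) = Pi.topologicalSpace := by
  have hc : @Continuous _ _ Pi.topologicalSpace (metricTopology (mm n ε hn h0 h1 e))
      (id : (ℕ → Bool) → (ℕ → Bool)) := by
    rw [@continuous_iff_continuousAt]
    intro x s hs
    obtain ⟨K, hK⟩ := mm_cyl hn h0 h1 e x s hs
    rw [Filter.mem_map]
    have hev : ∀ᶠ y in nhds x, ∀ i ∈ Finset.range K, e x i = e y i := by
      rw [Filter.eventually_all_finset]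
      intro i _
      have := ((isOpen_discrete {e x i}).preimage (he i)).mem_nhds (show x ∈ _ from rfl)
      filter_upwards [this] with y hy
      exact Eq.symm hy
    filter_upwards [hev] with y hy
    exact hK y (fun i hi => hy i (Finset.mem_range.mpr hi))
  exact top_eq _ _ inferInstance (t2_metric _) hc
end

lemma exists_equiv (m : ℕ → ℕ) (hm : ∀ k, 1 ≤ m k) :
    ∃ e : (ℕ → Bool) ≃ (∀ k, Fin (2 ^ m k)), ∀ k, Continuous (fun y => e y k) := by
  haveI : Infinite (Σ k, Fin (m k)) :=
    Infinite.of_injective (fun k => (⟨k, ⟨0, hm k⟩⟩ : Σ k, Fin (m k))) (fun a b h => by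
      simpa using congrArg Sigma.fst h)
  obtain ⟨g⟩ : Nonempty ((Σ k, Fin (m k)) ≃ ℕ) := nonempty_equiv_of_countable
  have hq : ∀ k, Nonempty ((Fin (m k) → Bool) ≃ Fin (2 ^ m k)) := fun k =>
    ⟨Fintype.equivFinOfCardEq (by simp)⟩
  have q := fun k => Classical.choice (hq k)
  refine ⟨((Equiv.arrowCongr g.symm (Equiv.refl Bool)).trans
    (Equiv.piCurry (fun _ _ => Bool))).trans (Equiv.piCongrRight q), fun k => ?_⟩
  have : Continuous (fun y : ℕ → Bool => q k (fun j => y (g ⟨k, j⟩))) :=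
    (continuous_of_discreteTopology (f := q k)).comp
      (continuous_pi fun j => continuous_apply _)
  exact this

end CantorTypes

theorem statement_1 (u v w : Bool) (h : (u, v, w) ≠ (true, true, true)) :
    ∃ m : MetricSpace (ℕ → Bool),
      metricTopology m = Pi.topologicalSpace ∧
      @HasType (ℕ → Bool) m u v w ∧
      (u = false → @SD (ℕ → Bool) m = Set.univ) ∧
      (v = false → @SUD (ℕ → Bool) m = Set.univ) ∧
      (w = false → @SUP (ℕ → Bool) m = Set.univ) := by
  clear h
  let mk : ℕ → ℕ := fun k =>
    if Even k then (if u = true then 1 else k + 1) else (if v = true then 1 else k + 1)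
  have hmk : ∀ k, 1 ≤ mk k := by
    intro k
    simp only [mk]
    split_ifs <;> omega
  obtain ⟨e, he⟩ := CantorTypes.exists_equiv mk hmk
  let n : ℕ → ℕ := fun k => 2 ^ mk k
  let ε : ℕ → ℝ := fun k => if w = true then 1 / 2 else 1 / (k + 2)
  have hn : ∀ k, 2 ≤ n k := fun k => by
    calc 2 = 2 ^ 1 := by norm_num
      _ ≤ 2 ^ mk k := Nat.pow_le_pow_right (by norm_num) (hmk k)
  have h0 : ∀ k, 0 < ε k := by
    intro k
    simp only [ε]
    split_ifs <;> positivity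
  have h1 : ∀ k, ε k ≤ 1 / 2 := by
    intro k
    simp only [ε]
    split_ifs
    · exact le_refl _
    · apply one_div_le_one_div_of_le (by norm_num)
      have : (0 : ℝ) ≤ k := by positivity
      linarith
  have hpow : ∀ k, k < 2 ^ (k + 1) := fun k =>
    Nat.lt_two_pow_self.trans (Nat.pow_lt_pow_right (by norm_num) (by omega))
  have hu1 : u = true → ∀ k, Even k → n k = 2 := by
    intro hu k hk
    simp [n, mk, hu, hk]
  have hu0 : u = false → ∀ k, Even k → k < n k := by
    intro hu k hk
    simp only [n, mk, hu, hk]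
    simpa using hpow k
  have hv1 : v = true → ∀ k, ¬ Even k → n k = 2 := by
    intro hv k hk
    simp [n, mk, hv, hk]
  have hv0 : v = false → ∀ k, ¬ Even k → k < n k := by
    intro hv k hk
    simp only [n, mk, hv, hk]
    simpa using hpow k
  have hw1 : w = true → ∀ k, ε k = 1 / 2 := by
    intro hw k
    simp [ε, hw]
  have hw0 : w = false → ∀ k, ε k = 1 / (k + 2) := by
    intro hw k
    simp [ε, hw]
  refine ⟨CantorTypes.mm n ε hn h0 h1 e, CantorTypes.mm_top hn h0 h1 e he, ?_⟩
  letI : MetricSpace (ℕ → Bool) := CantorTypes.mm n ε hn h0 h1 e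
  have hd : ∀ x y : ℕ → Bool, dist x y = CantorTypes.DD n ε (e x) (e y) := fun _ _ => rfl
  have hfull : ∀ q, (∀ i < 0, e (fun _ => true) i = q i) → ∃ y, e y = q :=
    fun q _ => e.surjective q
  have hnb : ∀ (x : ℕ → Bool) (s : Set (ℕ → Bool)),
      s ∈ @nhds _ (metricTopology (CantorTypes.mm n ε hn h0 h1 e)) x →
      ∃ K, ∀ q, (∀ i < K, e x i = q i) → ∃ y : s, e y = q := by
    intro x s hs
    obtain ⟨K, hK⟩ := CantorTypes.mm_cyl hn h0 h1 e x s hs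
    refine ⟨K, fun q hq => ⟨⟨e.symm q, hK _ ?_⟩, by simp⟩⟩
    simpa using hq
  have hds : ∀ (s : Set (ℕ → Bool)) (x y : s),
      dist x y = CantorTypes.DD n ε (e x) (e y) := fun _ _ _ => rfl
  refine ⟨⟨⟨fun hD => ?_, fun hu => ?_⟩, ⟨fun hD => ?_, fun hv => ?_⟩,
    ⟨fun hD => ?_, fun hw => ?_⟩⟩, fun hu => ?_, fun hv => ?_, fun hw => ?_⟩
  · by_contra hu
    exact CantorTypes.not_doubling hn h0 h1 hd _ 0 hfull (hu0 (by simpa using hu)) hD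
  · exact CantorTypes.doubling hn h0 h1 hd e.surjective (hu1 hu)
  · by_contra hv
    exact CantorTypes.not_ud hn h0 hd _ 0 hfull (hv0 (by simpa using hv)) hD
  · exact CantorTypes.ud hn h0 h1 hd (hv1 hv)
  · by_contra hw
    exact CantorTypes.not_up hn (hw0 (by simpa using hw)) hd _ 0 hfull hD
  · exact CantorTypes.up hn (hw1 hw) hd e.surjective
  · refine Set.eq_univ_of_forall fun x s hs => ?_
    obtain ⟨K, hK⟩ := hnb x s hs
    exact CantorTypes.not_doubling (f := fun y : s => e y) hn h0 h1 (hds s) _ K hK (hu0 hu)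
  · refine Set.eq_univ_of_forall fun x s hs => ?_
    obtain ⟨K, hK⟩ := hnb x s hs
    exact CantorTypes.not_ud (f := fun y : s => e y) hn h0 (hds s) _ K hK (hv0 hv)
  · refine Set.eq_univ_of_forall fun x s hs => ?_
    obtain ⟨K, hK⟩ := hnb x s hs
    exact CantorTypes.not_up (f := fun y : s => e y) hn (hw0 hw) (hds s) _ K hK

end
end

section
/- For every pair (a,b) ∈ [0,∞]² with a ≤ b, there exists a metric space (X,d) whose underlying topological space is a Cantor space (homeomorphic to the middle-third Cantor set) such that the Hausdorff dimension of (X,d) equals a and the Assouad dimension of (X,d) equals b. -/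
open Metric Set
open scoped ENNReal NNReal

noncomputable section

open Filter Topology MeasureTheory

/-- Type synonym for `2^ℕ` with the metric `d_α`. -/
def SeqSp (α : ℕ → ℝ) (_hα : IsShrinking α) : Type := ℕ → Bool

instance instSeqSp (α : ℕ → ℝ) (hα : IsShrinking α) : MetricSpace (SeqSp α hα) :=
  seqMetricSpace α hα

lemma seqSp_dist_le {α : ℕ → ℝ} {hα : IsShrinking α} {x y : SeqSp α hα} {n : ℕ}
    (h : ∀ i < n, x i = y i) : dist x y ≤ α n := by
  show seqDist α x y ≤ α n
  by_cases hxy : x = y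
  · subst hxy
    exact (seqDist_self α x).le.trans (hα.1 n).le
  · rw [seqDist_of_ne α hxy]
    apply hα.2.1
    have hne : {n | x n ≠ y n}.Nonempty := by
      rcases Function.ne_iff.mp hxy with ⟨n, hn⟩
      exact ⟨n, hn⟩
    have hmem : x (seqV x y) ≠ y (seqV x y) := Nat.sInf_mem hne
    by_contra hlt
    exact hmem (h _ (not_le.mp hlt))

lemma seqSp_eq_of_dist_lt {α : ℕ → ℝ} {hα : IsShrinking α} {x y : SeqSp α hα} {n : ℕ}
    (h : dist x y < α n) : ∀ i ≤ n, x i = y i := by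
  intro i hi
  by_contra hne
  have hxy : x ≠ y := fun h => hne (by rw [h])
  have h' : seqDist α x y < α n := h
  rw [seqDist_of_ne α hxy] at h'
  have h2 : seqV x y ≤ i := Nat.sInf_le hne
  have := hα.2.1 _ _ (h2.trans hi)
  linarith

lemma seqSp_cantor (α : ℕ → ℝ) (hα : IsShrinking α) :
    @IsCantorSpace (SeqSp α hα) (metricTopology (instSeqSp α hα)) := by
  let e : (ℕ → Bool) ≃ SeqSp α hα := Equiv.refl _
  have hc : Continuous e := by
    rw [Metric.continuous_iff']
    intro x ε hε
    obtain ⟨n, hn⟩ := (hα.2.2.eventually (gt_mem_nhds hε)).exists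
    have : ∀ᶠ y in 𝓝 x, ∀ i ∈ Finset.range n, y i = x i := by
      rw [Filter.eventually_all_finset]
      intro i _
      have : Tendsto (fun y : ℕ → Bool => y i) (𝓝 x) (𝓝 (x i)) := (continuous_apply i).tendsto x
      rw [nhds_discrete Bool, tendsto_pure] at this
      exact this
    filter_upwards [this] with y hy
    refine lt_of_le_of_lt (seqSp_dist_le (n := n) fun i hi => hy i (Finset.mem_range.2 hi)) hn
  exact ⟨(hc.homeoOfEquivCompactToT2).symm.trans cantorSetHomeomorphNatToBool.symm⟩

/-- Upper bound for the Hausdorff dimension. -/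
lemma seqSp_dimH_le (α : ℕ → ℝ) (hα : IsShrinking α) (s : ℝ≥0)
    (h : ∃ᶠ n in atTop, (2 : ℝ) ^ n * (α n) ^ (s : ℝ) ≤ 1) :
    hausdorffDim (SeqSp α hα) ≤ s := by
  obtain ⟨φ, hφ, hP⟩ := extraction_of_frequently_atTop h
  unfold hausdorffDim
  let _ : MeasurableSpace (SeqSp α hα) := borel _
  have : BorelSpace (SeqSp α hα) := ⟨rfl⟩
  apply dimH_le_of_hausdorffMeasure_ne_top
  have key : μH[(s : ℝ)] (univ : Set (SeqSp α hα)) ≤ 1 := by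
    have hd : ∀ (k : ℕ) (c : Fin (φ k) → Bool),
        ediam {x : SeqSp α hα | ∀ i : Fin (φ k), x i = c i} ≤ ENNReal.ofReal (α (φ k)) := by
      intro k c
      refine Metric.ediam_le fun x hx y hy => ?_
      rw [edist_dist]
      apply ENNReal.ofReal_le_ofReal
      apply seqSp_dist_le
      intro i hi
      rw [hx ⟨i, hi⟩, hy ⟨i, hi⟩]
    refine (Measure.hausdorffMeasure_le_liminf_sum (l := atTop) (ι := fun k => Fin (φ k) → Bool)
      (s : ℝ) _
      (fun k => ENNReal.ofReal (α (φ k))) ?_ 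
      (fun k c => {x : SeqSp α hα | ∀ i : Fin (φ k), x i = c i}) (Eventually.of_forall hd)
      (Eventually.of_forall ?_)).trans ?_
    · have := (ENNReal.continuous_ofReal.tendsto 0).comp (hα.2.2.comp hφ.tendsto_atTop)
      rw [ENNReal.ofReal_zero] at this
      exact this
    · intro k x _
      exact mem_iUnion.2 ⟨fun i => x i, fun i => rfl⟩
    · refine liminf_le_of_le (by isBoundedDefault) ?_
      intro b hb
      obtain ⟨k, hk⟩ := hb.exists
      refine hk.trans ?_
      calc _ ≤ ∑ c : Fin (φ k) → Bool, (ENNReal.ofReal (α (φ k))) ^ (s : ℝ) := by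
            refine Finset.sum_le_sum fun c _ => ?_
            exact ENNReal.rpow_le_rpow (hd k c) s.2
        _ = ENNReal.ofReal (2 ^ (φ k) * (α (φ k)) ^ (s : ℝ)) := by
            rw [ENNReal.ofReal_mul (by positivity), ENNReal.ofReal_rpow_of_pos (hα.1 _),
              ENNReal.ofReal_pow (by norm_num)]
            simp
        _ ≤ 1 := by
            rw [← ENNReal.ofReal_one]
            exact ENNReal.ofReal_le_ofReal (hP k)
  exact ne_top_of_le_ne_top ENNReal.one_ne_top key

/-- Lower bound for the Hausdorff dimension. -/
lemma seqSp_le_dimH (α : ℕ → ℝ) (hα : IsShrinking α) (s : ℝ≥0) (hs : 0 < s) (C : ℝ≥0)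
    (h : ∀ n, ((2 : ℝ) ^ n)⁻¹ ≤ C * (α n) ^ (s : ℝ)) :
    (s : ℝ≥0∞) ≤ hausdorffDim (SeqSp α hα) := by
  let f : SeqSp α hα → ℝ := fun x => Real.ofDigits (fun i => if x i then (1 : Fin 2) else 0)
  have hf : HolderOnWith C s f univ := by
    intro x _ y _
    by_cases hxy : x = y
    · subst hxy; simp
    obtain ⟨n, hd, hn⟩ : ∃ n, dist x y = α n ∧ ∀ i < n, x i = y i := by
      refine ⟨seqV x y, seqDist_of_ne α hxy, fun i hi => ?_⟩
      by_contra hne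
      exact absurd (Nat.sInf_le hne : seqV x y ≤ i) (not_le.2 hi)
    rw [edist_dist, edist_dist, hd, ENNReal.ofReal_rpow_of_pos (hα.1 _), Real.dist_eq,
      ← ENNReal.ofReal_coe_nnreal, ← ENNReal.ofReal_mul C.coe_nonneg]
    apply ENNReal.ofReal_le_ofReal
    refine le_trans ?_ (h _)
    refine (Real.abs_ofDigits_sub_ofDigits_le (n := n) ?_).trans (by norm_num)
    intro i hi
    simp [hn i hi]
  have h1 := hf.dimH_image_le hs
  have h2 : Icc (0 : ℝ) 1 ⊆ f '' univ := by
    intro z hz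
    obtain ⟨d, -, hd⟩ := Real.ofDigits_SurjOn (b := 2) (by norm_num) hz
    refine ⟨fun i => decide (d i = 1), trivial, ?_⟩
    rw [← hd]
    show Real.ofDigits _ = _
    congr 1
    ext i
    have : d i = 0 ∨ d i = 1 := by
      generalize d i = k
      fin_cases k <;> simp
    rcases this with h | h <;> simp [h]
  have h3 : dimH (Icc (0 : ℝ) 1) = 1 := by
    rw [Real.dimH_of_nonempty_interior (E := ℝ)]
    · simp
    · simp
  have h4 : 1 ≤ dimH (univ : Set (SeqSp α hα)) / s := h3 ▸ (dimH_mono h2).trans h1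
  rwa [ENNReal.le_div_iff_mul_le (Or.inl (by simpa using hs.ne')) (Or.inl (by simp)), one_mul] at h4

/-- Replace the entries of `x` with indices in `[m, m+k)` by `w`. -/
def patch {α : ℕ → ℝ} {hα : IsShrinking α} (x : SeqSp α hα) (m k : ℕ) (w : Fin k → Bool) :
    SeqSp α hα :=
  fun i => if h : m ≤ i ∧ i < m + k then w ⟨i - m, by omega⟩ else x i

lemma patch_lt {α : ℕ → ℝ} {hα : IsShrinking α} (x : SeqSp α hα) (m k : ℕ) (w : Fin k → Bool)
    {i : ℕ} (hi : i < m) : patch x m k w i = x i := by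
  unfold patch
  rw [dif_neg (by omega)]

lemma patch_add {α : ℕ → ℝ} {hα : IsShrinking α} (x : SeqSp α hα) (m k : ℕ) (w : Fin k → Bool)
    (j : Fin k) : patch x m k w (m + j) = w j := by
  unfold patch
  rw [dif_pos (by omega)]
  congr 1
  ext
  simp

lemma assouad_cover {α : ℕ → ℝ} (hα : IsShrinking α) {s C : ℝ} (hs : 0 < s) (hC : 0 < C)
    (h : ∀ m k, (2 : ℝ) ^ k * (α (m + k)) ^ s ≤ C * (α m) ^ s) :
    ∀ ε : ℝ, 0 < ε → ε < 2 → ∀ r : ℝ, 0 < r → ∀ x : SeqSp α hα,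
      ∃ c : Finset (SeqSp α hα), (c.card : ℝ) ≤ (2 * C + 2 ^ s) * ε ^ (-s) ∧
        Metric.closedBall x r ⊆ ⋃ y ∈ c, Metric.closedBall y (ε * r) := by
  classical
  intro ε hε hε2 r hr x
  have hex : ∀ ρ : ℝ, 0 < ρ → ∃ n, α n ≤ ρ ∧ ∀ i < n, ρ < α i := by
    intro ρ hρ
    have h1 : ∃ n, α n ≤ ρ :=
      ((hα.2.2.eventually (gt_mem_nhds hρ)).exists).imp fun n hn => le_of_lt hn
    exact ⟨Nat.find h1, Nat.find_spec h1, fun i hi => not_le.1 (Nat.find_min h1 hi)⟩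
  obtain ⟨m, hm, hm'⟩ := hex r hr
  obtain ⟨n, hn, hn'⟩ := hex (ε * r) (by positivity)
  have hball : ∀ y ∈ Metric.closedBall x r, ∀ i < m, y i = x i := by
    intro y hy i hi
    exact seqSp_eq_of_dist_lt (lt_of_le_of_lt (Metric.mem_closedBall.1 hy) (hm' i hi)) i le_rfl
  have hεs : 0 < ε ^ (-s) := by positivity
  rcases le_or_gt n m with hnm | hnm
  · refine ⟨{x}, ?_, ?_⟩
    · have : 1 ≤ (2 : ℝ) ^ s * ε ^ (-s) := by
        rw [Real.rpow_neg hε.le, ← div_eq_mul_inv, ← Real.div_rpow (by norm_num) hε.le]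
        apply Real.one_le_rpow _ hs.le
        rw [le_div_iff₀ hε]; linarith
      have h2 : 0 < 2 * C * ε ^ (-s) := by positivity
      simp only [Finset.card_singleton, Nat.cast_one]
      linarith
    · intro y hy
      simp only [Finset.mem_singleton, iUnion_iUnion_eq_left]
      exact (seqSp_dist_le (hball y hy)).trans ((hα.2.1 _ _ hnm).trans hn)
  · obtain ⟨k, rfl⟩ : ∃ k, n = m + (k + 1) := ⟨n - m - 1, by omega⟩
    refine ⟨Finset.univ.image (patch x m (k + 1)), ?_, ?_⟩
    · have h1 : ((Finset.univ.image (patch x m (k + 1))).card : ℝ) ≤ 2 ^ (k + 1) := by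
        have := Finset.card_image_le (s := Finset.univ) (f := patch x m (k + 1))
        simp only [Finset.card_univ, Fintype.card_fun, Fintype.card_bool, Fintype.card_fin] at this
        exact_mod_cast this
      have h2 : ε * r < α (m + k) := hn' _ (by omega)
      have h3 : (ε * r) ^ s ≤ α (m + k) ^ s := Real.rpow_le_rpow (by positivity) h2.le hs.le
      have h4 : α m ^ s ≤ r ^ s := Real.rpow_le_rpow (hα.1 _).le hm hs.le
      have h5 := h m k
      have h6 : (2 : ℝ) ^ k * (ε ^ s * r ^ s) ≤ C * r ^ s := by
        rw [← Real.mul_rpow hε.le hr.le]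
        calc _ ≤ (2 : ℝ) ^ k * α (m + k) ^ s := by gcongr
          _ ≤ C * α m ^ s := h5
          _ ≤ _ := by gcongr
      have h7 : (2 : ℝ) ^ k * ε ^ s ≤ C := by
        have : 0 < r ^ s := by positivity
        rw [← mul_assoc] at h6
        exact le_of_mul_le_mul_right h6 this
      have h8 : (2 : ℝ) ^ k ≤ C * ε ^ (-s) := by
        rw [Real.rpow_neg hε.le, ← div_eq_mul_inv, le_div_iff₀ (by positivity)]
        exact h7
      have h9 : 0 < (2 : ℝ) ^ s * ε ^ (-s) := by positivity
      rw [pow_succ] at h1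
      nlinarith
    · intro y hy
      simp only [mem_iUnion]
      refine ⟨patch x m (k + 1) (fun j => y (m + j)), Finset.mem_image_of_mem _ (Finset.mem_univ _), ?_⟩
      refine (seqSp_dist_le (n := m + (k + 1)) ?_).trans hn
      intro i hi
      rcases lt_or_ge i m with hi' | hi'
      · rw [patch_lt _ _ _ _ hi']
        exact hball y hy i hi'
      · obtain ⟨j, rfl⟩ := Nat.exists_eq_add_of_le hi'
        exact (patch_add x m (k + 1) (fun j => y (m + j)) ⟨j, by omega⟩).symm

lemma assouad_of_cover {α : ℕ → ℝ} (hα : IsShrinking α) {s K : ℝ}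
    (h : ∀ ε : ℝ, 0 < ε → ε < 2 → ∀ r : ℝ, 0 < r → ∀ x : SeqSp α hα,
      ∃ c : Finset (SeqSp α hα), (c.card : ℝ) ≤ K * ε ^ (-s) ∧
        Metric.closedBall x r ⊆ ⋃ y ∈ c, Metric.closedBall y (ε * r)) :
    ∀ m k, (2 : ℝ) ^ k * (α (m + k)) ^ s ≤ (K * 2 ^ s) * (α m) ^ s := by
  intro m k
  have p1 := hα.1 m
  have p2 := hα.1 (m + k)
  have hle := hα.2.1 m (m + k) (by omega)
  let x : SeqSp α hα := fun _ => false
  obtain ⟨c, hc, hcov⟩ := h (α (m + k) / (2 * α m)) (by positivity)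
    (by rw [div_lt_iff₀ (by positivity)]; linarith) (α m) p1 x
  have hr : α (m + k) / (2 * α m) * α m = α (m + k) / 2 := by field_simp
  rw [hr] at hcov
  have h1 : ∀ w : Fin k → Bool, ∃ y ∈ c, dist (patch x m k w) y ≤ α (m + k) / 2 := by
    intro w
    have : patch x m k w ∈ Metric.closedBall x (α m) :=
      seqSp_dist_le fun i hi => patch_lt x m k w hi
    simpa using hcov this
  choose f hf hfd using h1
  have hinj : Function.Injective f := by
    intro w w' hww
    ext j
    have e1 := seqSp_eq_of_dist_lt (n := m + k) (lt_of_le_of_lt (hfd w) (by linarith)) (m + j) (by omega)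
    have e2 := seqSp_eq_of_dist_lt (n := m + k) (lt_of_le_of_lt (hfd w') (by linarith)) (m + j) (by omega)
    rw [patch_add] at e1 e2
    rw [e1, e2, hww]
  have hcard : (2 : ℝ) ^ k ≤ c.card := by
    have := Finset.card_le_card_of_injOn (s := Finset.univ) (t := c) f (fun w _ => hf w) hinj.injOn
    simp only [Finset.card_univ, Fintype.card_fun, Fintype.card_bool, Fintype.card_fin] at this
    exact_mod_cast this
  have h3 := hcard.trans hc
  rw [Real.rpow_neg (by positivity), Real.div_rpow p2.le (by positivity),
    Real.mul_rpow (by norm_num) p1.le, inv_div, mul_div_assoc', le_div_iff₀ (by positivity)] at h3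
  linarith

lemma main_of_seq (a b : ℝ≥0∞) (t : ℕ → ℝ) (hmono : Monotone t) (htop : Tendsto t atTop atTop)
    (H1 : ∀ s : ℝ, 0 < s → a < ENNReal.ofReal s → ∃ᶠ n : ℕ in atTop, (n : ℝ) ≤ s * t n)
    (H2 : ∀ s : ℝ, 0 < s → ENNReal.ofReal s < a → ∃ c : ℝ, ∀ n : ℕ, s * t n ≤ n + c)
    (A1 : ∀ s : ℝ, 0 < s → b < ENNReal.ofReal s →
      ∃ c : ℝ, ∀ m k : ℕ, (k : ℝ) ≤ s * (t (m + k) - t m) + c)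
    (A2 : ∀ s : ℝ, 0 < s → (∃ c : ℝ, ∀ m k : ℕ, (k : ℝ) ≤ s * (t (m + k) - t m) + c) →
      b ≤ ENNReal.ofReal s) :
    ∃ (X : Type) (m : MetricSpace X),
      @IsCantorSpace X (metricTopology m) ∧
      @hausdorffDim X m = a ∧ @assouadDim X m = b := by
  have h2 : (0 : ℝ) < 2 := by norm_num
  let α : ℕ → ℝ := fun n => (2 : ℝ) ^ (-t n)
  have hα : IsShrinking α := by
    refine ⟨fun n => by positivity, fun m n hmn => ?_, ?_⟩
    · exact Real.rpow_le_rpow_of_exponent_le (by norm_num) (neg_le_neg (hmono hmn))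
    · have := (tendsto_rpow_atTop_of_base_lt_one (2⁻¹ : ℝ) (by norm_num) (by norm_num)).comp htop
      refine this.congr fun n => ?_
      simp only [Function.comp, α]
      rw [Real.inv_rpow h2.le, Real.rpow_neg h2.le]
  have hpow : ∀ n (s : ℝ), α n ^ s = (2 : ℝ) ^ (-(s * t n)) := by
    intro n s
    simp only [α]
    rw [← Real.rpow_mul h2.le]
    congr 1
    ring
  have hequiv : ∀ (s c : ℝ) (m k : ℕ), (2 : ℝ) ^ k * α (m + k) ^ s ≤ 2 ^ c * α m ^ s ↔
      (k : ℝ) ≤ s * (t (m + k) - t m) + c := by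
    intro s c m k
    rw [hpow, hpow, ← Real.rpow_natCast, ← Real.rpow_add h2, ← Real.rpow_add h2,
      Real.rpow_le_rpow_left_iff (by norm_num)]
    constructor <;> intro h <;> nlinarith
  refine ⟨SeqSp α hα, instSeqSp α hα, seqSp_cantor α hα, le_antisymm ?_ ?_, le_antisymm ?_ ?_⟩
  · by_contra hlt
    obtain ⟨s, hs1, hs2⟩ := ENNReal.lt_iff_exists_nnreal_btwn.1 (not_le.1 hlt)
    have hs0 : (0 : ℝ) < s := by
      have : (0 : ℝ≥0∞) < s := lt_of_le_of_lt zero_le hs1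
      exact_mod_cast this
    refine absurd (seqSp_dimH_le α hα s ?_) (not_le.2 hs2)
    refine (H1 s hs0 (by simpa using hs1)).mono fun n hn => ?_
    rw [hpow, ← Real.rpow_natCast, ← Real.rpow_add h2]
    exact Real.rpow_le_one_of_one_le_of_nonpos (by norm_num) (by linarith)
  · by_contra hlt
    obtain ⟨s, hs1, hs2⟩ := ENNReal.lt_iff_exists_nnreal_btwn.1 (not_le.1 hlt)
    have hs0 : 0 < s := by
      have : (0 : ℝ≥0∞) < s := lt_of_le_of_lt zero_le hs1
      exact_mod_cast this
    obtain ⟨c, hc⟩ := H2 s hs0 (by simpa using hs2)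
    refine absurd (seqSp_le_dimH α hα s hs0 ⟨2 ^ c, by positivity⟩ ?_) (not_le.2 hs1)
    intro n
    show _ ≤ (2 : ℝ) ^ c * _
    rw [hpow, ← Real.rpow_natCast, ← Real.rpow_add h2, ← Real.rpow_neg h2.le,
      Real.rpow_le_rpow_left_iff (by norm_num)]
    linarith [hc n]
  · by_contra hlt
    obtain ⟨s, hs1, hs2⟩ := ENNReal.lt_iff_exists_nnreal_btwn.1 (not_le.1 hlt)
    have hs0 : (0 : ℝ) < s := by
      have : (0 : ℝ≥0∞) < s := lt_of_le_of_lt zero_le hs1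
      exact_mod_cast this
    obtain ⟨c, hc⟩ := A1 s hs0 (by simpa using hs1)
    refine absurd (sInf_le ?_) (not_le.2 hs2)
    refine ⟨s, hs0, by simp, 2 * 2 ^ c + 2 ^ (s : ℝ), by positivity, ?_⟩
    exact assouad_cover hα hs0 (by positivity) fun m k => (hequiv _ _ _ _).2 (hc m k)
  · refine le_sInf ?_
    rintro d ⟨s, hs, rfl, K, hK, hcov⟩
    refine A2 s hs ⟨Real.logb 2 (K * 2 ^ s), fun m k => ?_⟩
    rw [← hequiv, Real.rpow_logb (by norm_num) (by norm_num) (by positivity)]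
    exact assouad_of_cover hα hcov m k

/-- The sparse set of long blocks. -/
def blk (i : ℕ) : Prop := ∃ j l : ℕ, l < j ∧ i = 2 ^ j + l

lemma blk_sum_le (k : ℕ) (v : ℕ → ℝ) (q : ℝ) (hq : 0 ≤ q) (i0 : ℕ) (hv : ∀ i, 0 ≤ v i)
    (h : ∀ i, i0 ≤ i → ¬ blk i → q ≤ v i) :
    q * ((2 : ℝ) ^ k - i0 - k ^ 2) ≤ ∑ i ∈ Finset.range (2 ^ k), v i := by
  classical
  have h1 : ∀ i ∈ Finset.range (2 ^ k),
      q - (if i < i0 then q else 0) - (if blk i then q else 0) ≤ v i := by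
    intro i _
    have := hv i
    by_cases h1 : i < i0
    · rw [if_pos h1]; split_ifs <;> linarith
    · by_cases h2 : blk i
      · rw [if_neg h1, if_pos h2]; linarith
      · rw [if_neg h1, if_neg h2]; linarith [h i (not_lt.1 h1) h2]
  refine le_trans ?_ (Finset.sum_le_sum h1)
  rw [Finset.sum_sub_distrib, Finset.sum_sub_distrib, ← Finset.sum_filter, ← Finset.sum_filter]
  simp only [Finset.sum_const, Finset.card_range, nsmul_eq_mul]
  have c1 : (((Finset.range (2 ^ k)).filter (fun i => i < i0)).card : ℝ) ≤ i0 := by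
    have : (Finset.range (2 ^ k)).filter (fun i => i < i0) ⊆ Finset.range i0 := by
      intro i hi
      simp only [Finset.mem_filter] at hi
      exact Finset.mem_range.2 hi.2
    have := Finset.card_le_card this
    rw [Finset.card_range] at this
    exact_mod_cast this
  have c2 : (((Finset.range (2 ^ k)).filter blk).card : ℝ) ≤ (k : ℝ) ^ 2 := by
    have : (Finset.range (2 ^ k)).filter blk ⊆
        (Finset.range k ×ˢ Finset.range k).image (fun p => 2 ^ p.1 + p.2) := by
      intro i hi
      simp only [Finset.mem_filter, Finset.mem_range] at hi
      obtain ⟨hi, j, l, hl, rfl⟩ := hi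
      have hj : j < k := by
        by_contra hj
        have := Nat.pow_le_pow_right (n := 2) (by norm_num) (not_lt.1 hj)
        omega
      exact Finset.mem_image.2 ⟨(j, l), by simp; omega, rfl⟩
    have := (Finset.card_le_card this).trans Finset.card_image_le
    rw [Finset.card_product, Finset.card_range] at this
    rw [sq]
    exact_mod_cast this
  push_cast
  nlinarith

lemma freq_of_blk (v : ℕ → ℝ) (q s : ℝ) (hq : 0 ≤ q) (hs : 0 ≤ s) (hqs : 1 < s * q) (i0 : ℕ)
    (hv : ∀ i, 0 ≤ v i) (h : ∀ i, i0 ≤ i → ¬ blk i → q ≤ v i) :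
    ∃ᶠ n : ℕ in atTop, (n : ℝ) ≤ s * ∑ i ∈ Finset.range n, v i := by
  have t1 : Tendsto (fun k : ℕ => s * q * ((i0 : ℝ) * ((k : ℝ) ^ 0 / 2 ^ k) + (k : ℝ) ^ 2 / 2 ^ k))
      atTop (𝓝 (s * q * ((i0 : ℝ) * 0 + 0))) := by
    have e0 := tendsto_pow_const_div_const_pow_of_one_lt 0 (r := (2 : ℝ)) (by norm_num)
    have e2 := tendsto_pow_const_div_const_pow_of_one_lt 2 (r := (2 : ℝ)) (by norm_num)
    exact ((e0.const_mul _).add e2).const_mul _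
  have hev := t1.eventually (gt_mem_nhds (show s * q * ((i0 : ℝ) * 0 + 0) < s * q - 1 by linarith))
  have key : ∀ᶠ k : ℕ in atTop,
      ((2 ^ k : ℕ) : ℝ) ≤ s * ∑ i ∈ Finset.range (2 ^ k), v i := by
    filter_upwards [hev] with k hk
    have hb := mul_le_mul_of_nonneg_left (blk_sum_le k v q hq i0 hv h) hs
    refine le_trans ?_ hb
    have h2k : (0 : ℝ) < 2 ^ k := by positivity
    have : s * q * ((i0 : ℝ) * ((k : ℝ) ^ 0 / 2 ^ k) + (k : ℝ) ^ 2 / 2 ^ k) =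
        s * q * (i0 + k ^ 2) / 2 ^ k := by field_simp
    rw [this, div_lt_iff₀ h2k] at hk
    push_cast
    nlinarith
  exact (tendsto_pow_atTop_atTop_of_one_lt (r := 2) (by norm_num)).frequently key.frequently

lemma sum_mono_of_nonneg (v : ℕ → ℝ) (hv : ∀ i, 0 ≤ v i) :
    Monotone fun n => ∑ i ∈ Finset.range n, v i :=
  monotone_nat_of_le_succ fun n => by rw [Finset.sum_range_succ]; linarith [hv n]

lemma block_lower (v : ℕ → ℝ) (hv : ∀ i, 0 ≤ v i) (s : ℝ) (hs : 0 ≤ s) (i0 : ℕ)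
    (h : ∀ i, i0 ≤ i → 1 ≤ s * v i) (m k : ℕ) :
    (k : ℝ) ≤ s * (∑ i ∈ Finset.range (m + k), v i - ∑ i ∈ Finset.range m, v i) + i0 := by
  induction k with
  | zero => simp
  | succ k ih =>
    rcases le_or_gt i0 (m + k) with h1 | h1
    · rw [← add_assoc, Finset.sum_range_succ]
      push_cast
      nlinarith [h _ h1]
    · have h3 := sum_mono_of_nonneg v hv (show m ≤ m + (k + 1) by omega)
      simp only at h3
      have h4 : ((k + 1 : ℕ) : ℝ) ≤ i0 := by exact_mod_cast (by omega : k + 1 ≤ i0)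
      have := mul_nonneg hs (sub_nonneg.2 h3)
      linarith

lemma main_top :
    ∃ (X : Type) (m : MetricSpace X),
      @IsCantorSpace X (metricTopology m) ∧
      @hausdorffDim X m = ∞ ∧ @assouadDim X m = ∞ := by
  let v : ℕ → ℝ := fun i => 1 / ((i : ℝ) + 1)
  have hv : ∀ i, 0 ≤ v i := fun i => by positivity
  have hm := sum_mono_of_nonneg v hv
  have hces : Tendsto (fun n : ℕ => (n : ℝ)⁻¹ * ∑ i ∈ Finset.range n, v i) atTop (𝓝 0) :=
    (tendsto_one_div_add_atTop_nhds_zero_nat (𝕜 := ℝ)).cesaro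
  have H2 : ∀ s : ℝ, 0 < s → ∃ c : ℝ, ∀ n : ℕ, s * ∑ i ∈ Finset.range n, v i ≤ n + c := by
    intro s hs
    have hev := hces.eventually (gt_mem_nhds (show (0 : ℝ) < s⁻¹ by positivity))
    obtain ⟨N, hN⟩ := eventually_atTop.1 (hev.and (eventually_gt_atTop 0))
    refine ⟨s * ∑ i ∈ Finset.range N, v i, fun n => ?_⟩
    have hn0 : (0 : ℝ) ≤ n := Nat.cast_nonneg n
    rcases le_total n N with h | h
    · have := mul_le_mul_of_nonneg_left (hm h) hs.le
      simp only at this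
      linarith
    · obtain ⟨h1, h2⟩ := hN n h
      have h3 : (0 : ℝ) < n := by exact_mod_cast h2
      rw [inv_mul_lt_iff₀ h3, ← div_eq_mul_inv, lt_div_iff₀ hs] at h1
      have : 0 ≤ s * ∑ i ∈ Finset.range N, v i :=
        mul_nonneg hs.le (Finset.sum_nonneg fun i _ => hv i)
      linarith
  refine main_of_seq ∞ ∞ _ hm Real.tendsto_sum_range_one_div_nat_succ_atTop ?_ ?_ ?_ ?_
  · intro s _ h; exact absurd h (by simp)
  · intro s hs _; exact H2 s hs
  · intro s _ h; exact absurd h (by simp)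
  · rintro s hs ⟨c, hc⟩
    exfalso
    obtain ⟨c', hc'⟩ := H2 (2 * s) (by positivity)
    obtain ⟨k, hk⟩ := exists_nat_gt (2 * c + c')
    have e1 := hc 0 k
    have e2 := hc' k
    simp only [zero_add, Finset.range_zero, Finset.sum_empty, sub_zero] at e1
    linarith

lemma main_fin (a b : ℝ≥0∞) (hab : a ≤ b) (ha : a ≠ ∞) :
    ∃ (X : Type) (m : MetricSpace X),
      @IsCantorSpace X (metricTopology m) ∧
      @hausdorffDim X m = a ∧ @assouadDim X m = b := by
  classical
  let p : ℕ → ℝ := fun i => if a = 0 then (i : ℝ) + 1 else (a⁻¹).toReal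
  let v : ℕ → ℝ := fun i => if b ≠ 0 ∧ blk i then (b⁻¹).toReal else p i
  have hp : ∀ i, 0 ≤ p i := fun i => by
    simp only [p]; split_ifs <;> positivity
  have hv : ∀ i, 0 ≤ v i := fun i => by
    simp only [v]; split_ifs
    · exact ENNReal.toReal_nonneg
    · exact hp i
  have hm := sum_mono_of_nonneg v hv
  have inv_lt : ∀ {x : ℝ≥0∞} {s : ℝ}, x ≠ 0 → x < ENNReal.ofReal s → 0 < s →
      1 < s * (x⁻¹).toReal := by
    intro x s hx hxs hs
    have hxt : x ≠ ∞ := ne_top_of_lt hxs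
    have h0 : 0 < x.toReal := ENNReal.toReal_pos hx hxt
    rw [ENNReal.toReal_inv, ← div_eq_mul_inv, one_lt_div h0]
    exact (ENNReal.lt_ofReal_iff_toReal_lt hxt).1 hxs
  -- the Hausdorff upper estimate
  have H1 : ∀ s : ℝ, 0 < s → a < ENNReal.ofReal s →
      ∃ᶠ n : ℕ in atTop, (n : ℝ) ≤ s * ∑ i ∈ Finset.range n, v i := by
    intro s hs has
    by_cases ha0 : a = 0
    · obtain ⟨i0, hi0⟩ := exists_nat_gt (2 / s)
      refine freq_of_blk v (2 / s) s (by positivity) hs.le (by field_simp; norm_num) i0 hv ?_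
      intro i hi hb
      have : (i0 : ℝ) ≤ i := by exact_mod_cast hi
      simp only [v, p, hb, and_false, if_false, ha0, if_true]
      linarith
    · refine freq_of_blk v (a⁻¹).toReal s ENNReal.toReal_nonneg hs.le (inv_lt ha0 has hs) 0 hv ?_
      intro i _ hb
      simp only [v, p, hb, and_false, if_false, ha0]
      exact le_rfl
  have htop : Tendsto (fun n => ∑ i ∈ Finset.range n, v i) atTop atTop := by
    obtain ⟨s, hs⟩ := ENNReal.lt_iff_exists_nnreal_btwn.1 (lt_top_iff_ne_top.2 ha)
    have hs0 : (0 : ℝ) < s := by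
      have : (0 : ℝ≥0∞) < s := lt_of_le_of_lt zero_le hs.1
      exact_mod_cast this
    refine tendsto_atTop_atTop_of_monotone hm fun B => ?_
    have hf := H1 s hs0 (by simpa using hs.1)
    obtain ⟨N, hN⟩ := exists_nat_gt (s * B)
    obtain ⟨n, h1, h2⟩ := (hf.and_eventually (eventually_ge_atTop N)).exists
    refine ⟨n, ?_⟩
    have h3 : (N : ℝ) ≤ n := by exact_mod_cast h2
    have : s * B ≤ s * ∑ i ∈ Finset.range n, v i := by linarith
    exact le_of_mul_le_mul_left this hs0
  refine main_of_seq a b _ hm htop H1 ?_ ?_ ?_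
  · intro s hs hsa
    refine ⟨0, fun n => ?_⟩
    have ha0 : a ≠ 0 := (lt_of_le_of_lt zero_le hsa).ne'
    have hat : 0 < a.toReal := ENNReal.toReal_pos ha0 ha
    have hva : ∀ i, v i ≤ (a⁻¹).toReal := by
      intro i
      simp only [v, p, if_neg ha0]
      split_ifs
      · exact ENNReal.toReal_mono (ENNReal.inv_ne_top.2 ha0) (ENNReal.inv_le_inv.2 hab)
      · exact le_rfl
    have h1 : ∑ i ∈ Finset.range n, v i ≤ n * (a⁻¹).toReal := by
      refine (Finset.sum_le_sum fun i _ => hva i).trans ?_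
      simp
    have h2 : s < a.toReal := (ENNReal.ofReal_lt_iff_lt_toReal hs.le ha).1 hsa
    have h3 : s * (a⁻¹).toReal ≤ 1 := by
      rw [ENNReal.toReal_inv, ← div_eq_mul_inv, div_le_one hat]; exact h2.le
    have h4 := mul_le_mul_of_nonneg_left h1 hs.le
    have h5 : (0 : ℝ) ≤ n := Nat.cast_nonneg n
    nlinarith
  · intro s hs hbs
    by_cases hb0 : b = 0
    · have ha0 : a = 0 := le_antisymm (hab.trans hb0.le) zero_le
      obtain ⟨i0, hi0⟩ := exists_nat_gt (1 / s)
      refine ⟨i0, block_lower v hv s hs.le i0 fun i hi => ?_⟩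
      have h1 : (i0 : ℝ) ≤ i := by exact_mod_cast hi
      simp only [v, p, hb0, ha0, ne_eq, not_true_eq_false, false_and, if_false, if_true]
      rw [div_lt_iff₀ hs] at hi0
      nlinarith
    · have hb := inv_lt hb0 hbs hs
      by_cases ha0 : a = 0
      · obtain ⟨i0, hi0⟩ := exists_nat_gt (1 / s)
        refine ⟨i0, block_lower v hv s hs.le i0 fun i hi => ?_⟩
        have h1 : (i0 : ℝ) ≤ i := by exact_mod_cast hi
        simp only [v, p, ha0, if_true]
        split_ifs
        · exact hb.le
        · rw [div_lt_iff₀ hs] at hi0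
          nlinarith
      · have ha' := inv_lt ha0 (hab.trans_lt hbs) hs
        refine ⟨(0 : ℕ), block_lower v hv s hs.le 0 fun i _ => ?_⟩
        simp only [v, p, if_neg ha0]
        split_ifs
        · exact hb.le
        · exact ha'.le
  · rintro s hs ⟨c, hc⟩
    by_cases hb0 : b = 0
    · simp [hb0]
    have hk : ∀ k : ℕ, (k : ℝ) ≤ s * (k * (b⁻¹).toReal) + c := by
      intro k
      have := hc (2 ^ k) k
      rw [Finset.sum_range_add, add_sub_cancel_left] at this
      have h2 : ∑ x ∈ Finset.range k, v (2 ^ k + x) = k * (b⁻¹).toReal := by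
        rw [Finset.sum_congr rfl (g := fun _ => (b⁻¹).toReal)]
        · simp
        · intro l hl
          simp only [v]
          rw [if_pos ⟨hb0, k, l, Finset.mem_range.1 hl, rfl⟩]
      rwa [h2] at this
    have h1 : 1 ≤ s * (b⁻¹).toReal := by
      by_contra hlt
      have hpos : 0 < 1 - s * (b⁻¹).toReal := by linarith
      obtain ⟨k, hk'⟩ := exists_nat_gt (c / (1 - s * (b⁻¹).toReal))
      rw [div_lt_iff₀ hpos] at hk'
      have := hk k
      nlinarith
    have hbt : b ≠ ∞ := by
      rintro rfl
      simp at h1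
      linarith
    have h0 : 0 < b.toReal := ENNReal.toReal_pos hb0 hbt
    rw [ENNReal.toReal_inv, ← div_eq_mul_inv, one_le_div h0] at h1
    exact (ENNReal.le_ofReal_iff_toReal_le hbt hs.le).2 h1

theorem statement_2 (a b : ℝ≥0∞) (hab : a ≤ b) :
    ∃ (X : Type) (m : MetricSpace X),
      @IsCantorSpace X (metricTopology m) ∧
      @hausdorffDim X m = a ∧ @assouadDim X m = b := by
  by_cases ha : a = ∞
  · subst ha
    obtain rfl : b = ∞ := top_le_iff.1 hab
    exact main_top
  · exact main_fin a b hab ha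

end
end
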